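/- The real number 2/5 is the least element of the set of all real numbers c such that every finite cubic simple graph G satisfies γ_r(G) ≤ c·|V(G)|. -/

import Mathlib

/-- `S` is a restrained dominating set of `G`: every vertex not in `S` has a
neighbor in `S` (domination) and also a neighbor not in `S` (restraint). -/
def IsRestrainedDomSet {V : Type*} (G : SimpleGraph V) (S : Set V) : Prop :=
  (∀ v ∉ S, ∃ u ∈ S, G.Adj v u) ∧ (∀ v ∉ S, ∃ u ∉ S, G.Adj v u)

/-- The restrained domination number of a finite graph: the minimum cardinality
of a restrained dominating set. -/
noncomputable def restrainedDominationNumber {V : Type*} [Fintype V] (G : SimpleGraph V) : ℕ :=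
  sInf {n : ℕ | ∃ S : Set V, IsRestrainedDomSet G S ∧ S.ncard = n}

section PartA
open Classical

namespace RD
variable {V : Type} [Fintype V]

/-- No vertex outside `S` is isolated outside `S`. -/
def Feas (G : SimpleGraph V) (S : Finset V) : Prop := ∀ t, t ∉ S → ∃ u, u ∉ S ∧ G.Adj t u

/-- Undominated vertices. -/
def InU (G : SimpleGraph V) (S : Finset V) (v : V) : Prop := v ∉ S ∧ ∀ u, G.Adj v u → u ∉ S

noncomputable def USet (G : SimpleGraph V) (S : Finset V) : Finset V :=
  Finset.univ.filter (fun v => InU G S v)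

noncomputable def ESet (G : SimpleGraph V) (S : Finset V) : Finset (V × V) :=
  Finset.univ.filter (fun p => p.1 ∈ S ∧ p.2 ∈ S ∧ G.Adj p.1 p.2)

/-- The extremal choice of `S`. -/
structure Ctx (G : SimpleGraph V) (S : Finset V) : Prop where
  cubic : ∀ v, ∃ x y z, x ≠ y ∧ x ≠ z ∧ y ≠ z ∧ ∀ t, G.Adj v t ↔ t = x ∨ t = y ∨ t = z
  feas : Feas G S
  prim : ∀ S', Feas G S' → S.card + (USet G S).card ≤ S'.card + (USet G S').card
  sec : ∀ S', Feas G S' → S'.card + (USet G S').card = S.card + (USet G S).card →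
    S.card ≤ S'.card
  ter : ∀ S', Feas G S' → S'.card + (USet G S').card = S.card + (USet G S).card →
    S'.card = S.card → (ESet G S').card ≤ (ESet G S).card

theorem exists_ctx (G : SimpleGraph V)
    (cubic : ∀ v, ∃ x y z, x ≠ y ∧ x ≠ z ∧ y ≠ z ∧ ∀ t, G.Adj v t ↔ t = x ∨ t = y ∨ t = z) :
    ∃ S, Ctx G S := by
  let f : Finset V → ℕ ×ₗ ℕ ×ₗ ℕ := fun S =>
    toLex (S.card + (USet G S).card, toLex (S.card, (Fintype.card (V × V) - (ESet G S).card)))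
  obtain ⟨S, hS, hmin⟩ := Finset.exists_min_image
    (Finset.univ.filter (fun S : Finset V => Feas G S)) f
    ⟨Finset.univ, by rw [Finset.mem_filter]; exact ⟨Finset.mem_univ _, fun t ht => absurd (Finset.mem_univ t) ht⟩⟩
  simp only [Finset.mem_filter, Finset.mem_univ, true_and] at hS hmin
  have key : ∀ S', Feas G S' → S.card + (USet G S).card < S'.card + (USet G S').card ∨
      (S.card + (USet G S).card = S'.card + (USet G S').card ∧
        (S.card < S'.card ∨ (S.card = S'.card ∧ (Fintype.card (V × V) - (ESet G S).card) ≤ (Fintype.card (V × V) - (ESet G S').card)))) := by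
    intro S' h
    have := hmin S' h
    simpa [f, Prod.Lex.toLex_le_toLex] using this
  have hle : ∀ S', (ESet G S').card ≤ Fintype.card (V × V) := fun S' => Finset.card_le_univ _
  refine ⟨S, cubic, hS, fun S' h => ?_, fun S' h h1 => ?_, fun S' h h1 h2 => ?_⟩
  · have := key S' h; omega
  · have := key S' h; omega
  · have := key S' h; have := hle S; have := hle S'; omega

variable {G : SimpleGraph V} {S : Finset V}

/-- Basic exchange lemma. -/
theorem flip_core (A R K N : List V)
    (hF : Feas G S)
    (hA : ∀ α ∈ A, α ∉ S) (hR : ∀ ρ ∈ R, ρ ∈ S) (hRn : R.Nodup) (hKn : K.Nodup)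
    (hK : ∀ κ ∈ K, (κ ∉ S ∧ ∀ u, G.Adj κ u → u ∉ S) ∧ (κ ∈ A ∨ ∃ α ∈ A, G.Adj κ α))
    (iso1 : ∀ α ∈ A, ∀ t, G.Adj α t → t ∈ S ∨ t ∈ A ∨ ∃ z, G.Adj t z ∧ (z ∈ R ∨ (z ∉ S ∧ z ∉ A)))
    (iso2 : ∀ ρ ∈ R, ∃ z, G.Adj ρ z ∧ (z ∈ R ∨ (z ∉ S ∧ z ∉ A)))
    (new1 : ∀ ρ ∈ R, ρ ∈ N ∨ ∃ z, G.Adj ρ z ∧ ((z ∈ S ∧ z ∉ R) ∨ z ∈ A))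
    (new2 : ∀ ρ ∈ R, ∀ t, G.Adj ρ t → t ∉ S → t ∉ A →
      t ∈ N ∨ ∃ z, G.Adj t z ∧ ((z ∈ S ∧ z ∉ R) ∨ z ∈ A)) :
    ∃ S', Feas G S' ∧ (∀ x, x ∈ S' ↔ (x ∈ S ∨ x ∈ A) ∧ x ∉ R) ∧
      S'.card + R.length ≤ S.card + A.length ∧
      (USet G S').card + K.length ≤ (USet G S).card + N.length := by
  have memS' : ∀ x, x ∈ (S ∪ A.toFinset) \ R.toFinset ↔ (x ∈ S ∨ x ∈ A) ∧ x ∉ R := by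
    intro x; simp
  refine ⟨(S ∪ A.toFinset) \ R.toFinset, ?_, memS', ?_, ?_⟩
  · intro t ht
    rw [memS'] at ht
    suffices h : ∃ z, G.Adj t z ∧ (z ∈ R ∨ (z ∉ S ∧ z ∉ A)) by
      obtain ⟨z, hz, h⟩ := h
      refine ⟨z, ?_, hz⟩
      rw [memS']; tauto
    by_cases htR : t ∈ R
    · exact iso2 t htR
    · have ht' : t ∉ S ∧ t ∉ A := by tauto
      obtain ⟨u, hu, htu⟩ := hF t ht'.1
      by_cases huA : u ∈ A
      · rcases iso1 u huA t htu.symm with h | h | h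
        · exact absurd h ht'.1
        · exact absurd h ht'.2
        · exact h
      · exact ⟨u, htu, Or.inr ⟨hu, huA⟩⟩
  · have h1 : R.toFinset.card = R.length := List.toFinset_card_of_nodup hRn
    have h2 : R.toFinset ⊆ S ∪ A.toFinset := by
      intro x hx; simp at hx; simp [hR x hx]
    have h3 := Finset.card_sdiff_add_card_eq_card h2
    have h4 := Finset.card_union_le S A.toFinset
    have h5 := A.toFinset_card_le
    omega
  · have h1 : K.toFinset.card = K.length := List.toFinset_card_of_nodup hKn
    have h2 : K.toFinset ⊆ USet G S := by
      intro x hx; simp at hx; exact Finset.mem_filter.2 ⟨Finset.mem_univ _, (hK x hx).1⟩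
    have h3 := Finset.card_sdiff_add_card_eq_card h2
    have h5 := N.toFinset_card_le
    have h6 : USet G ((S ∪ A.toFinset) \ R.toFinset) ⊆ (USet G S \ K.toFinset) ∪ N.toFinset := by
      intro t ht
      simp only [USet, Finset.mem_filter, Finset.mem_univ, true_and, InU, memS'] at ht
      simp only [Finset.mem_union, Finset.mem_sdiff, List.mem_toFinset, USet, Finset.mem_filter,
        Finset.mem_univ, true_and]
      obtain ⟨ht1, ht2⟩ := ht
      have hAR : ∀ z, z ∈ A → z ∉ R := fun z hz hz' => hA z hz (hR z hz')
      by_cases htR : t ∈ R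
      · rcases new1 t htR with h | ⟨z, hz, h⟩
        · exact Or.inr h
        · exact absurd (by have := hAR z; tauto) (ht2 z hz)
      · have ht' : t ∉ S ∧ t ∉ A := by tauto
        by_cases hU : InU G S t
        · left
          refine ⟨hU, fun hk => ?_⟩
          rcases (hK t hk).2 with h | ⟨α, hα, h⟩
          · exact ht'.2 h
          · exact ht2 α h ⟨Or.inr hα, hAR α hα⟩
        · have : ∃ u, G.Adj t u ∧ u ∈ S := by
            by_contra hcon
            push Not at hcon
            exact hU ⟨ht'.1, hcon⟩
          obtain ⟨u, hu, huS⟩ := this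
          have huR : u ∈ R := by
            by_contra h
            exact ht2 u hu ⟨Or.inl huS, h⟩
          rcases new2 u huR t hu.symm ht'.1 ht'.2 with h | ⟨z, hz, h⟩
          · exact Or.inr h
          · exact absurd (by have := hAR z; tauto) (ht2 z hz)
    have h7 := Finset.card_le_card h6
    have h8 := Finset.card_union_le (USet G S \ K.toFinset) N.toFinset
    omega

theorem Ctx.flip1 (c : Ctx G S) (A R K N : List V)
    (hlen : A.length + N.length < R.length + K.length)
    (hA : ∀ α ∈ A, α ∉ S) (hR : ∀ ρ ∈ R, ρ ∈ S) (hRn : R.Nodup) (hKn : K.Nodup)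
    (hK : ∀ κ ∈ K, (κ ∉ S ∧ ∀ u, G.Adj κ u → u ∉ S) ∧ (κ ∈ A ∨ ∃ α ∈ A, G.Adj κ α))
    (iso1 : ∀ α ∈ A, ∀ t, G.Adj α t → t ∈ S ∨ t ∈ A ∨ ∃ z, G.Adj t z ∧ (z ∈ R ∨ (z ∉ S ∧ z ∉ A)))
    (iso2 : ∀ ρ ∈ R, ∃ z, G.Adj ρ z ∧ (z ∈ R ∨ (z ∉ S ∧ z ∉ A)))
    (new1 : ∀ ρ ∈ R, ρ ∈ N ∨ ∃ z, G.Adj ρ z ∧ ((z ∈ S ∧ z ∉ R) ∨ z ∈ A))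
    (new2 : ∀ ρ ∈ R, ∀ t, G.Adj ρ t → t ∉ S → t ∉ A →
      t ∈ N ∨ ∃ z, G.Adj t z ∧ ((z ∈ S ∧ z ∉ R) ∨ z ∈ A)) : False := by
  obtain ⟨S', h1, h2, h3, h4⟩ := flip_core A R K N c.feas hA hR hRn hKn hK iso1 iso2 new1 new2
  have := c.prim S' h1
  omega

theorem Ctx.flip2 (c : Ctx G S) (A R K N : List V)
    (hlen : A.length + N.length = R.length + K.length) (hlen2 : A.length < R.length)
    (hA : ∀ α ∈ A, α ∉ S) (hR : ∀ ρ ∈ R, ρ ∈ S) (hRn : R.Nodup) (hKn : K.Nodup)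
    (hK : ∀ κ ∈ K, (κ ∉ S ∧ ∀ u, G.Adj κ u → u ∉ S) ∧ (κ ∈ A ∨ ∃ α ∈ A, G.Adj κ α))
    (iso1 : ∀ α ∈ A, ∀ t, G.Adj α t → t ∈ S ∨ t ∈ A ∨ ∃ z, G.Adj t z ∧ (z ∈ R ∨ (z ∉ S ∧ z ∉ A)))
    (iso2 : ∀ ρ ∈ R, ∃ z, G.Adj ρ z ∧ (z ∈ R ∨ (z ∉ S ∧ z ∉ A)))
    (new1 : ∀ ρ ∈ R, ρ ∈ N ∨ ∃ z, G.Adj ρ z ∧ ((z ∈ S ∧ z ∉ R) ∨ z ∈ A))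
    (new2 : ∀ ρ ∈ R, ∀ t, G.Adj ρ t → t ∉ S → t ∉ A →
      t ∈ N ∨ ∃ z, G.Adj t z ∧ ((z ∈ S ∧ z ∉ R) ∨ z ∈ A)) : False := by
  obtain ⟨S', h1, h2, h3, h4⟩ := flip_core A R K N c.feas hA hR hRn hKn hK iso1 iso2 new1 new2
  have := c.prim S' h1
  have := c.sec S' h1 (by omega)
  omega

/-- Third level: `Ls` are the ordered pairs lost inside `S`, `Gn` the gained ones. -/
theorem Ctx.flip3 (c : Ctx G S) (A R K N : List V) (Ls Gn : List (V × V))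
    (hlen : A.length + N.length = R.length + K.length) (hlen2 : A.length = R.length)
    (hlen3 : Ls.length < Gn.length)
    (hA : ∀ α ∈ A, α ∉ S) (hR : ∀ ρ ∈ R, ρ ∈ S) (hRn : R.Nodup) (hKn : K.Nodup)
    (hK : ∀ κ ∈ K, (κ ∉ S ∧ ∀ u, G.Adj κ u → u ∉ S) ∧ (κ ∈ A ∨ ∃ α ∈ A, G.Adj κ α))
    (iso1 : ∀ α ∈ A, ∀ t, G.Adj α t → t ∈ S ∨ t ∈ A ∨ ∃ z, G.Adj t z ∧ (z ∈ R ∨ (z ∉ S ∧ z ∉ A)))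
    (iso2 : ∀ ρ ∈ R, ∃ z, G.Adj ρ z ∧ (z ∈ R ∨ (z ∉ S ∧ z ∉ A)))
    (new1 : ∀ ρ ∈ R, ρ ∈ N ∨ ∃ z, G.Adj ρ z ∧ ((z ∈ S ∧ z ∉ R) ∨ z ∈ A))
    (new2 : ∀ ρ ∈ R, ∀ t, G.Adj ρ t → t ∉ S → t ∉ A →
      t ∈ N ∨ ∃ z, G.Adj t z ∧ ((z ∈ S ∧ z ∉ R) ∨ z ∈ A))
    (hGn : Gn.Nodup)
    (hG : ∀ p ∈ Gn, G.Adj p.1 p.2 ∧ (p.1 ∈ A ∨ p.2 ∈ A) ∧ (p.1 ∈ A ∨ (p.1 ∈ S ∧ p.1 ∉ R)) ∧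
      (p.2 ∈ A ∨ (p.2 ∈ S ∧ p.2 ∉ R)))
    (hL : ∀ ρ ∈ R, ∀ z, G.Adj ρ z → z ∈ S → (ρ, z) ∈ Ls ∧ (z, ρ) ∈ Ls) : False := by
  obtain ⟨S', h1, h2, h3, h4⟩ := flip_core A R K N c.feas hA hR hRn hKn hK iso1 iso2 new1 new2
  have h5 := c.prim S' h1
  have h6 := c.sec S' h1 (by omega)
  have h7 := c.ter S' h1 (by omega) (by omega)
  have hAR : ∀ z, z ∈ A → z ∉ R := fun z hz hz' => hA z hz (hR z hz')
  have hsub : (ESet G S \ Ls.toFinset) ∪ Gn.toFinset ⊆ ESet G S' := by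
    intro p hp
    simp only [Finset.mem_union, Finset.mem_sdiff, List.mem_toFinset] at hp
    simp only [ESet, Finset.mem_filter, Finset.mem_univ, true_and, h2] at hp ⊢
    rcases hp with ⟨⟨ha, hb, hab⟩, hn⟩ | hp
    · refine ⟨⟨Or.inl ha, fun h => ?_⟩, ⟨Or.inl hb, fun h => ?_⟩, hab⟩
      · exact hn (hL _ h _ hab hb).1
      · exact hn (hL _ h _ hab.symm ha).2
    · have := hG p hp
      have := hAR p.1
      have := hAR p.2
      tauto
  have hdis : Disjoint (ESet G S \ Ls.toFinset) Gn.toFinset := by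
    rw [Finset.disjoint_left]
    intro p hp hp'
    simp only [Finset.mem_sdiff, List.mem_toFinset] at hp hp'
    simp only [ESet, Finset.mem_filter, Finset.mem_univ, true_and] at hp
    have := hG p hp'
    have := hA p.1
    have := hA p.2
    tauto
  have h8 := Finset.card_le_card hsub
  rw [Finset.card_union_of_disjoint hdis, List.toFinset_card_of_nodup hGn] at h8
  have h9 := Finset.le_card_sdiff Ls.toFinset (ESet G S)
  have h10 := Ls.toFinset_card_le
  omega

end RD
end PartA

section PartB
open Classical
set_option linter.unusedSectionVars false
namespace RD
variable {V : Type} [Fintype V] {G : SimpleGraph V} {S : Finset V}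

/-- `x, y, z` are the three neighbours of `v`. -/
def Nb (G : SimpleGraph V) (v x y z : V) : Prop :=
  x ≠ y ∧ x ≠ z ∧ y ≠ z ∧ G.Adj v x ∧ G.Adj v y ∧ G.Adj v z ∧ G.Adj x v ∧ G.Adj y v ∧ G.Adj z v ∧
    ∀ t, G.Adj v t → t = x ∨ t = y ∨ t = z

/-- `b` is a private neighbour of `k`. -/
def Priv (G : SimpleGraph V) (S : Finset V) (k b : V) : Prop :=
  k ∈ S ∧ b ∉ S ∧ G.Adj b k ∧ ∀ u, G.Adj b u → u ∈ S → u = k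

/-- `y` is a leaf (outside `S`) attached to `b`. -/
def Leaf (G : SimpleGraph V) (S : Finset V) (y b : V) : Prop :=
  y ∉ S ∧ b ∉ S ∧ G.Adj y b ∧ ∀ t, G.Adj y t → t ∉ S → t = b

/-- No leaf is attached to `b`. -/
def NL (G : SimpleGraph V) (S : Finset V) (b : V) : Prop :=
  ∀ t, G.Adj b t → t ∉ S → ∃ z, G.Adj t z ∧ z ∉ S ∧ z ≠ b

theorem not_NL {b : V} (hb : b ∉ S) (h : ¬ NL G S b) : ∃ y, Leaf G S y b := by
  unfold NL at h
  push Not at h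
  obtain ⟨t, h1, h2, h3⟩ := h
  exact ⟨t, h2, hb, h1.symm, h3⟩

theorem NL.not_leaf {b y : V} (h : NL G S b) (hy : Leaf G S y b) : False := by
  obtain ⟨h1, h2, h3, h4⟩ := hy
  obtain ⟨z, a1, a2, a3⟩ := h y h3.symm h1
  exact a3 (h4 z a1 a2)

theorem Ctx.nb1 (c : Ctx G S) {v x : V} (h : G.Adj v x) : ∃ y z, Nb G v x y z := by
  obtain ⟨a, b, d, h1, h2, h3, h4⟩ := c.cubic v
  have := (h4 x).1 h
  unfold Nb
  have hs := G.adj_comm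
  rcases this with rfl | rfl | rfl
  · exact ⟨b, d, by grind⟩
  · exact ⟨a, d, by grind⟩
  · exact ⟨a, b, by grind⟩

theorem Ctx.nb2 (c : Ctx G S) {v x y : V} (h : G.Adj v x) (h' : G.Adj v y) (hne : x ≠ y) :
    ∃ z, Nb G v x y z := by
  obtain ⟨a, b, h1⟩ := c.nb1 h
  unfold Nb at *
  have hs := G.adj_comm
  have : y = a ∨ y = b := by grind
  rcases this with rfl | rfl
  · exact ⟨b, by grind⟩
  · exact ⟨a, by grind⟩

theorem Ctx.nb3 (c : Ctx G S) {v x y z : V} (h : G.Adj v x) (h' : G.Adj v y) (h'' : G.Adj v z)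
    (h1 : x ≠ y) (h2 : x ≠ z) (h3 : y ≠ z) :  Nb G v x y z := by
  obtain ⟨a, h1⟩ := c.nb2 h h' h1
  unfold Nb at *
  have hs := G.adj_comm
  have : z = a := by grind
  subst this
  grind

theorem Nb.swap {v x y z : V} (h : Nb G v x y z) : Nb G v x z y := by
  unfold Nb at *; grind

theorem Nb.rot {v x y z : V} (h : Nb G v x y z) : Nb G v y z x := by
  unfold Nb at *; grind

/-- B1 -/
theorem Ctx.b1 (c : Ctx G S) {u m x : V} (hu : u ∈ S) (hm : m ∈ S) (hx : x ∉ S)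
    (hum : G.Adj u m) (hux : G.Adj u x) :
    ∃ b z, Nb G u m b z ∧ Priv G S u b ∧ Priv G S u z := by
  have hsym : ∀ u v, G.Adj u v → G.Adj v u := fun _ _ h => h.symm
  have hirr : ∀ v, ¬ G.Adj v v := fun _ => G.irrefl
  have key : ∀ b, ∃ z, z ≠ b ∧ Priv G S u z := by
    intro b
    by_contra hcon
    have hcon : ∀ z, z ≠ b → z ∉ S → G.Adj u z → ∃ t, G.Adj z t ∧ t ∈ S ∧ t ≠ u := by
      intro z h1 h2 h3
      by_contra h4
      push Not at h4
      exact hcon ⟨z, h1, hu, h2, h3.symm, h4⟩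
    refine c.flip2 [] [u] [] [b] (by simp) (by simp) ?_ ?_ ?_ ?_ ?_ ?_ ?_ ?_ ?_ <;>
      grind
  obtain ⟨b, -, hb⟩ := key u
  obtain ⟨z, hzb, hz⟩ := key b
  refine ⟨b, z, c.nb3 hum hb.2.2.1.symm hz.2.2.1.symm ?_ ?_ hzb.symm, hb, hz⟩
  · rintro rfl; exact hb.2.1 hm
  · rintro rfl; exact hz.2.1 hm

/-- B2 -/
theorem Ctx.b2 (c : Ctx G S) {u : V} (hu : u ∈ S) (h0 : ∀ t, G.Adj u t → t ∉ S) :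
    ∃ b, Priv G S u b := by
  by_contra hcon
  have hsym : ∀ u v, G.Adj u v → G.Adj v u := fun _ _ h => h.symm
  have hirr : ∀ v, ¬ G.Adj v v := fun _ => G.irrefl
  have hcon : ∀ z, G.Adj u z → ∃ t, G.Adj z t ∧ t ∈ S ∧ t ≠ u := by
    intro z h3
    by_contra h4
    push Not at h4
    exact hcon ⟨z, hu, h0 z h3, h3.symm, h4⟩
  obtain ⟨x, y, z, -, -, -, h⟩ := c.cubic u
  have := (h x).2 (by simp)
  refine c.flip2 [] [u] [] [u] (by simp) (by simp) ?_ ?_ ?_ ?_ ?_ ?_ ?_ ?_ ?_ <;> grind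

/-- B3 -/
theorem Ctx.b3 (c : Ctx G S) {u u' : V} (hu : u ∈ S) (hu' : u' ∈ S) (h : G.Adj u u')
    (h3 : ∀ t, G.Adj u t → t ∈ S) (h3' : ∀ t, G.Adj u' t → t ∈ S) : False := by
  have hsym : ∀ u v, G.Adj u v → G.Adj v u := fun _ _ h => h.symm
  have hirr : ∀ v, ¬ G.Adj v v := fun _ => G.irrefl
  have hne := h.ne
  obtain ⟨x, y, hx⟩ := c.nb1 h
  obtain ⟨x', y', hx'⟩ := c.nb1 h.symm
  unfold Nb at *
  refine c.flip1 [] [u, u'] [] [] (by simp) ?_ ?_ ?_ ?_ ?_ ?_ ?_ ?_ ?_ <;> grind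

/-- B4 -/
theorem Ctx.b4 (c : Ctx G S) {v v' : V} (hv : InU G S v) (hv' : InU G S v') (h : G.Adj v v')
    (hl : NL G S v) : False := by
  have hsym : ∀ u v, G.Adj u v → G.Adj v u := fun _ _ h => h.symm
  have hirr : ∀ v, ¬ G.Adj v v := fun _ => G.irrefl
  have hne := h.ne
  refine c.flip1 [v] [] [v, v'] [] (by simp) ?_ ?_ ?_ ?_ ?_ ?_ ?_ ?_ ?_ <;> grind [InU, NL]

/-- B5 -/
theorem Ctx.b5 (c : Ctx G S) {k b w w' : V} (hb : Priv G S k b) (hw : InU G S w)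
    (hw' : InU G S w') (h : G.Adj b w) (h' : G.Adj b w') : w = w' := by
  by_contra hne
  have hsym : ∀ u v, G.Adj u v → G.Adj v u := fun _ _ h => h.symm
  have hirr : ∀ v, ¬ G.Adj v v := fun _ => G.irrefl
  have hn := c.nb3 hb.2.2.1 h h' (by grind [Priv, InU]) (by grind [Priv, InU]) hne
  obtain ⟨x, y, hx⟩ := c.nb1 h.symm
  obtain ⟨x', y', hx'⟩ := c.nb1 h'.symm
  unfold Nb Priv InU at *
  refine c.flip1 [b] [] [w, w'] [] (by simp) ?_ ?_ ?_ ?_ ?_ ?_ ?_ ?_ ?_ <;> grind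

/-- B6 -/
theorem Ctx.b6 (c : Ctx G S) {v w w' : V} (hv : InU G S v) (hw : InU G S w)
    (hw' : InU G S w') (h : G.Adj v w) (h' : G.Adj v w') : w = w' := by
  by_contra hne
  have hsym : ∀ u v, G.Adj u v → G.Adj v u := fun _ _ h => h.symm
  have hirr : ∀ v, ¬ G.Adj v v := fun _ => G.irrefl
  by_cases hl : NL G S v
  · exact c.b4 hv hw h hl
  obtain ⟨a, ha⟩ := not_NL hv.1 hl
  obtain ⟨q, r, hq⟩ := c.nb1 ha.2.2.1
  have hqS : q ∈ S ∧ r ∈ S := by grind [Nb, Leaf]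
  have hn := c.nb3 ha.2.2.1.symm h h' (by grind [InU, Leaf, Nb]) (by grind [InU, Leaf, Nb]) hne
  obtain ⟨x, y, hx⟩ := c.nb1 h.symm
  obtain ⟨x', y', hx'⟩ := c.nb1 h'.symm
  unfold Nb Leaf InU at *
  refine c.flip1 [v, a] [] [v, w, w'] [] (by simp) ?_ ?_ ?_ ?_ ?_ ?_ ?_ ?_ ?_ <;> grind

/-- every vertex sees at most one undominated vertex -/
theorem Ctx.uniqU (c : Ctx G S) {t w w' : V} (hw : InU G S w)
    (hw' : InU G S w') (h : G.Adj t w) (h' : G.Adj t w') : w = w' := by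
  by_contra hne
  have ht : t ∉ S := hw.2 t h.symm
  by_cases htU : InU G S t
  · exact hne (c.b6 htU hw hw' h h')
  have : ∃ k, G.Adj t k ∧ k ∈ S := by
    by_contra hcon; push Not at hcon; exact htU ⟨ht, hcon⟩
  obtain ⟨k, hk, hkS⟩ := this
  have hn := c.nb3 hk h h' (by rintro rfl; exact hw.1 hkS) (by rintro rfl; exact hw'.1 hkS) hne
  refine hne (c.b5 (k := k) (b := t) ⟨hkS, ht, hk, ?_⟩ hw hw' h h')
  unfold Nb InU at *
  grind

theorem Ctx.leaf_nb (c : Ctx G S) {y b : V} (h : Leaf G S y b) :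
    ∃ q r, Nb G y b q r ∧ q ∈ S ∧ r ∈ S := by
  obtain ⟨q, r, hq⟩ := c.nb1 h.2.2.1
  refine ⟨q, r, hq, ?_⟩
  unfold Nb Leaf at *
  grind

theorem Ctx.leaf_nb' (c : Ctx G S) {y b q : V} (h : Leaf G S y b) (hq : q ∈ S) (hyq : G.Adj y q) :
    ∃ r, Nb G y b q r ∧ r ∈ S := by
  obtain ⟨r, hr⟩ := c.nb2 h.2.2.1 hyq (by rintro rfl; exact h.2.1 hq)
  refine ⟨r, hr, ?_⟩
  unfold Nb Leaf at *
  grind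

theorem Ctx.leaf_s0 (c : Ctx G S) {y b q : V} (h : Leaf G S y b) (hq : q ∈ S) (hyq : G.Adj y q) :
    ∀ t, G.Adj q t → t ∉ S := by
  intro t hqt ht
  obtain ⟨r, hr, hrS⟩ := c.leaf_nb' h hq hyq
  obtain ⟨x, z, hx, hp, hp'⟩ := c.b1 hq ht h.1 hqt hyq.symm
  unfold Nb Priv Leaf at *
  grind

/-- at least one private neighbour, besides the leaf -/
theorem Ctx.leaf_priv (c : Ctx G S) {y b q : V} (h : Leaf G S y b) (hq : q ∈ S) (hyq : G.Adj y q) :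
    ∃ q1 q2, Nb G q y q1 q2 ∧ Priv G S q q1 ∧ q2 ∉ S := by
  have h0 := c.leaf_s0 h hq hyq
  obtain ⟨q1, h1⟩ := c.b2 hq h0
  obtain ⟨r, hr, hrS⟩ := c.leaf_nb' h hq hyq
  obtain ⟨q2, h2⟩ := c.nb2 hyq.symm h1.2.2.1.symm (by rintro rfl; grind [Priv, Nb])
  exact ⟨q1, q2, h2, h1, h0 _ (by grind [Nb])⟩

/-- B7 -/
theorem Ctx.b7 (c : Ctx G S) {a v g : V} (hv : InU G S v) (h : Leaf G S a v) (hg : g ∈ S)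
    (hag : G.Adj a g) : ∃ g1 g2, Nb G g a g1 g2 ∧ Priv G S g g1 ∧ Priv G S g g2 := by
  obtain ⟨g1, g2, h1, h2, h3⟩ := c.leaf_priv h hg hag
  refine ⟨g1, g2, h1, h2, ?_⟩
  obtain ⟨r, hr, hrS⟩ := c.leaf_nb' h hg hag
  obtain ⟨v1, v2, hv1⟩ := c.nb1 h.2.2.1.symm
  by_contra hcon
  have hcon : ∃ u, G.Adj g2 u ∧ u ∈ S ∧ u ≠ g := by
    by_contra h4
    push Not at h4
    exact hcon ⟨hg, h3, by grind [Nb], h4⟩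
  obtain ⟨u, hu⟩ := hcon
  have hirr : ∀ v, ¬ G.Adj v v := fun _ => G.irrefl
  have hs0 := c.leaf_s0 h hg hag
  unfold Nb Priv Leaf InU at *
  refine c.flip3 [a] [g] [v] [g1] [] [(a, r)] (by simp) (by simp) (by simp) ?_ ?_ ?_ ?_ ?_ ?_ ?_ ?_ ?_ ?_ ?_ ?_ <;> grind

end RD
end PartB

section PartC
open Classical
set_option linter.unusedSectionVars false
namespace RD
variable {V : Type} [Fintype V] {G : SimpleGraph V} {S : Finset V}

/-- two private neighbours of an `S`-vertex with an `S`-neighbour are not both next to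
leafless undominated vertices -/
theorem Ctx.p1 (c : Ctx G S) {k m b b' w w' : V} (hm : m ∈ S) (hk : Nb G k m b b')
    (hb : Priv G S k b) (hb' : Priv G S k b') (hw : InU G S w) (hw' : InU G S w')
    (h : G.Adj b w) (h' : G.Adj b' w') (hl : NL G S w) (hl' : NL G S w') : False := by
  have hsym : ∀ u v, G.Adj u v → G.Adj v u := fun _ _ h => h.symm
  have hirr : ∀ v, ¬ G.Adj v v := fun _ => G.irrefl
  by_cases hww : w = w'
  · subst hww
    unfold Nb Priv InU NL at *
    refine c.flip1 [w] [k] [w] [] (by simp) ?_ ?_ ?_ ?_ ?_ ?_ ?_ ?_ ?_ <;>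
    simp only [List.mem_cons, List.not_mem_nil, or_false, forall_eq_or_imp, forall_eq,
      List.nodup_cons, List.nodup_nil, not_or, false_or, not_false_eq_true, and_true, true_and] <;>
    (repeat' apply And.intro) <;> grind (splits := 20)
  · have hu : ∀ t, G.Adj t w → G.Adj t w' → False := fun t h1 h2 => hww (c.uniqU hw hw' h1 h2)
    have hww' : ¬ G.Adj w w' := fun h => c.b4 hw hw' h hl
    unfold Nb Priv InU NL at *
    refine c.flip1 [w, w'] [k] [w, w'] [] (by simp) ?_ ?_ ?_ ?_ ?_ ?_ ?_ ?_ ?_ <;>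
    simp only [List.mem_cons, List.not_mem_nil, or_false, forall_eq_or_imp, forall_eq,
      List.nodup_cons, List.nodup_nil, not_or, false_or, not_false_eq_true, and_true, true_and] <;>
    (repeat' apply And.intro) <;> grind (splits := 20)

/-- the same for `g` next to a leaf of an undominated vertex -/
theorem Ctx.p2 (c : Ctx G S) {v a g b b' w w' : V} (hv : InU G S v) (ha : Leaf G S a v)
    (hg : g ∈ S) (hk : Nb G g a b b')
    (hb : Priv G S g b) (hb' : Priv G S g b') (hw : InU G S w) (hw' : InU G S w')
    (h : G.Adj b w) (h' : G.Adj b' w') (hl : NL G S w) (hl' : NL G S w') : False := by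
  have hsym : ∀ u v, G.Adj u v → G.Adj v u := fun _ _ h => h.symm
  have hirr : ∀ v, ¬ G.Adj v v := fun _ => G.irrefl
  have hwv : w ≠ v := by rintro rfl; exact hl.not_leaf ha
  have hwv' : w' ≠ v := by rintro rfl; exact hl'.not_leaf ha
  have hv1 : ¬ G.Adj w v := fun h => c.b4 hw hv h hl
  have hv2 : ¬ G.Adj w' v := fun h => c.b4 hw' hv h hl'
  obtain ⟨q, hq, hqS⟩ := c.leaf_nb' ha hg (by grind [Nb])
  obtain ⟨v1, v2, hvn⟩ := c.nb1 ha.2.2.1.symm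
  by_cases hww : w = w'
  · subst hww
    unfold Nb Priv InU NL Leaf at *
    refine c.flip1 [a, w] [g] [v, w] [] (by simp) ?_ ?_ ?_ ?_ ?_ ?_ ?_ ?_ ?_ <;>
    simp only [List.mem_cons, List.not_mem_nil, or_false, forall_eq_or_imp, forall_eq,
      List.nodup_cons, List.nodup_nil, not_or, false_or, not_false_eq_true, and_true, true_and] <;>
    (repeat' apply And.intro) <;> grind (splits := 20)
  · have hu : ∀ t, G.Adj t w → G.Adj t w' → False := fun t h1 h2 => hww (c.uniqU hw hw' h1 h2)
    have hww' : ¬ G.Adj w w' := fun h => c.b4 hw hw' h hl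
    unfold Nb Priv InU NL Leaf at *
    refine c.flip1 [a, w, w'] [g] [v, w, w'] [] (by simp) ?_ ?_ ?_ ?_ ?_ ?_ ?_ ?_ ?_ <;>
    simp only [List.mem_cons, List.not_mem_nil, or_false, forall_eq_or_imp, forall_eq,
      List.nodup_cons, List.nodup_nil, not_or, false_or, not_false_eq_true, and_true, true_and] <;>
    (repeat' apply And.intro) <;> grind (splits := 20)

/-- legs have no private neighbour next to a leafless undominated vertex -/
theorem Ctx.f1 (c : Ctx G S) {k u b b' w : V} (hk : Nb G k u b b')
    (hu : u ∈ S) (hu3 : ∀ t, G.Adj u t → t ∈ S)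
    (hb : Priv G S k b) (hb' : Priv G S k b') (hw : InU G S w)
    (h : G.Adj b w) (hl : NL G S w) : False := by
  have hsym : ∀ u v, G.Adj u v → G.Adj v u := fun _ _ h => h.symm
  have hirr : ∀ v, ¬ G.Adj v v := fun _ => G.irrefl
  obtain ⟨u1, u2, hun⟩ := c.nb1 (show G.Adj u k by grind [Nb])
  unfold Nb Priv InU NL at *
  refine c.flip2 [w] [k, u] [w] [k, b'] (by simp) (by simp) ?_ ?_ ?_ ?_ ?_ ?_ ?_ ?_ ?_ <;>
    simp only [List.mem_cons, List.not_mem_nil, or_false, forall_eq_or_imp, forall_eq,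
      List.nodup_cons, List.nodup_nil, not_or, false_or, not_false_eq_true, and_true, true_and] <;>
    (repeat' apply And.intro) <;> grind (splits := 20)

theorem Ctx.f2 (c : Ctx G S) {k u b b' v : V} (hk : Nb G k u b b')
    (hu : u ∈ S) (hu3 : ∀ t, G.Adj u t → t ∈ S)
    (hb : Priv G S k b) (hb' : Priv G S k b') (hv : InU G S v)
    (h : G.Adj b v) (hl : NL G S b) : False := by
  have hsym : ∀ u v, G.Adj u v → G.Adj v u := fun _ _ h => h.symm
  have hirr : ∀ v, ¬ G.Adj v v := fun _ => G.irrefl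
  obtain ⟨u1, u2, hun⟩ := c.nb1 (show G.Adj u k by grind [Nb])
  obtain ⟨v1, v2, hvn⟩ := c.nb1 h.symm
  unfold Nb Priv InU NL at *
  refine c.flip1 [b] [k, u] [v] [b'] (by simp) ?_ ?_ ?_ ?_ ?_ ?_ ?_ ?_ ?_ <;>
    simp only [List.mem_cons, List.not_mem_nil, or_false, forall_eq_or_imp, forall_eq,
      List.nodup_cons, List.nodup_nil, not_or, false_or, not_false_eq_true, and_true, true_and] <;>
    (repeat' apply And.intro) <;> grind (splits := 20)

/-- `q` is a diamond with top `w`: it has exactly two privates, both adjacent to the leafless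
undominated `w`; `y` is the third neighbour. -/
def Diam (G : SimpleGraph V) (S : Finset V) (q w y : V) : Prop :=
  ∃ q1 q2, Nb G q y q1 q2 ∧ Priv G S q q1 ∧ Priv G S q q2 ∧ y ∉ S ∧ ¬ Priv G S q y ∧
    G.Adj q1 w ∧ G.Adj q2 w ∧ InU G S w ∧ NL G S w

/-- unfolded neighbourhood of a diamond -/
def DP (G : SimpleGraph V) (S : Finset V) (q w y r q1 q2 t1 t2 e ke e3 : V) : Prop :=
  Nb G q y q1 q2 ∧ q ∈ S ∧ y ∉ S ∧ G.Adj y r ∧ r ∈ S ∧ r ≠ q ∧ Nb G q1 q w t1 ∧ Nb G q2 q w t2 ∧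
  q1 ∉ S ∧ q2 ∉ S ∧ t1 ∉ S ∧ t2 ∉ S ∧ w ∉ S ∧ Nb G w q1 q2 e ∧ Nb G e w ke e3 ∧ e ∉ S ∧ ke ∈ S ∧
  e3 ∉ S

theorem Ctx.dp (c : Ctx G S) {q w y : V} (h : Diam G S q w y) :
    ∃ r q1 q2 t1 t2 e ke e3, DP G S q w y r q1 q2 t1 t2 e ke e3 := by
  obtain ⟨q1, q2, h1, h2, h3, h4, h5, h6, h7, h8, h9⟩ := h
  have hsym : ∀ u v, G.Adj u v → G.Adj v u := fun _ _ h => h.symm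
  have hirr : ∀ v, ¬ G.Adj v v := fun _ => G.irrefl
  have : ∃ r, G.Adj y r ∧ r ∈ S ∧ r ≠ q := by
    by_contra hcon
    push Not at hcon
    exact h5 ⟨h2.1, h4, by grind [Nb], hcon⟩
  obtain ⟨r, hr⟩ := this
  obtain ⟨t1, ht1⟩ := c.nb2 h2.2.2.1 h6 (by grind [Priv, InU])
  obtain ⟨t2, ht2⟩ := c.nb2 h3.2.2.1 h7 (by grind [Priv, InU])
  obtain ⟨e, he⟩ := c.nb2 h6.symm h7.symm (by grind [Nb])
  have hew : G.Adj e w := by grind [Nb]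
  have heU : ¬ InU G S e := fun h => c.b4 h8 h hew.symm h9
  have heS : e ∉ S := h8.2 e hew.symm
  have : ∃ ke, G.Adj e ke ∧ ke ∈ S := by
    by_contra hcon
    push Not at hcon
    exact heU ⟨heS, hcon⟩
  obtain ⟨ke, hke, hkeS⟩ := this
  obtain ⟨e3, he3⟩ := c.nb2 hew hke (by grind [InU])
  refine ⟨r, q1, q2, t1, t2, e, ke, e3, ?_⟩
  unfold DP
  have he3S : e3 ∉ S := by
    obtain ⟨z, hz⟩ := h9 e hew.symm heS
    grind [Nb, InU]
  refine ⟨h1, h2.1, h4, hr.1, hr.2.1, hr.2.2, ht1, ht2, h2.2.1, h3.2.1, ?_, ?_, h8.1, he, he3, heS,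
    hkeS, he3S⟩
  · grind [Nb, Priv]
  · grind [Nb, Priv]

/-- Dm1a -/
theorem Ctx.dm1a (c : Ctx G S) {q w y k m b b' : V} (hD : Diam G S q w y) (hm : m ∈ S)
    (hk : Nb G k m b b') (hb : Priv G S k b) (hb' : Priv G S k b') (hbw : G.Adj b w) : False := by
  have hsym : ∀ u v, G.Adj u v → G.Adj v u := fun _ _ h => h.symm
  have hirr : ∀ v, ¬ G.Adj v v := fun _ => G.irrefl
  obtain ⟨r, q1, q2, t1, t2, e, ke, e3, h⟩ := c.dp hD
  obtain ⟨_, _, -, hp, hp', -, hnp, -, -, hwU, hwl⟩ := hD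
  clear hp hp'
  unfold DP Nb Priv InU NL at *
  have hbe : b = e := by grind
  subst hbe
  have hkk : ke = k := by grind
  subst hkk
  refine c.flip2 [w] [q, ke] [w] [q, b'] (by simp) (by simp) ?_ ?_ ?_ ?_ ?_ ?_ ?_ ?_ ?_ <;>
    simp only [List.mem_cons, List.not_mem_nil, or_false, forall_eq_or_imp, forall_eq,
      List.nodup_cons, List.nodup_nil, not_or, false_or, not_false_eq_true, and_true, true_and] <;>
    (repeat' apply And.intro) <;> grind (splits := 20)

/-- Dm1c -/
theorem Ctx.dm1c (c : Ctx G S) {q w y k v a b b' : V} (hD : Diam G S q w y) (hv : InU G S v)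
    (ha : Leaf G S a v) (hkS : k ∈ S)
    (hk : Nb G k a b b') (hb : Priv G S k b) (hb' : Priv G S k b') (hbw : G.Adj b w) : False := by
  have hsym : ∀ u v, G.Adj u v → G.Adj v u := fun _ _ h => h.symm
  have hirr : ∀ v, ¬ G.Adj v v := fun _ => G.irrefl
  obtain ⟨r, q1, q2, t1, t2, e, ke, e3, h⟩ := c.dp hD
  have hD' := hD
  obtain ⟨q3, q4, hqn, hp, hp', -, hnp, hw3, hw4, hwU, hwl⟩ := hD'
  have hya : y ≠ a := by
    rintro rfl
    exact c.p2 hv ha hp.1 hqn hp hp' hwU hwU hw3 hw4 hwl hwl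
  have hwv : w ≠ v := by rintro rfl; exact hwl.not_leaf ha
  have hv1 : ¬ G.Adj w v := fun h => c.b4 hwU hv h hwl
  obtain ⟨x, hx, hxS⟩ := c.leaf_nb' ha hkS (by grind [Nb])
  obtain ⟨v1, v2, hvn⟩ := c.nb1 ha.2.2.1.symm
  clear hp hp' hqn hw3 hw4
  unfold DP Nb Priv InU NL Leaf at *
  have hbe : b = e := by grind
  subst hbe
  have hkk : ke = k := by grind
  subst hkk
  refine c.flip3 [w, a] [q, ke] [w, v] [q, b'] [] [(a, x)] (by simp) (by simp) (by simp)
    ?_ ?_ ?_ ?_ ?_ ?_ ?_ ?_ ?_ ?_ ?_ ?_ <;>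
    simp only [List.mem_cons, List.not_mem_nil, or_false, forall_eq_or_imp, forall_eq,
      List.nodup_cons, List.nodup_nil, not_or, false_or, not_false_eq_true, and_true, true_and] <;>
    (repeat' apply And.intro) <;> grind (splits := 20)

theorem Ctx.f2d (c : Ctx G S) {k u b b' v y q w : V} (hk : Nb G k u b b')
    (hu : u ∈ S) (hu3 : ∀ t, G.Adj u t → t ∈ S)
    (hb : Priv G S k b) (hb' : Priv G S k b') (hv : InU G S v)
    (h : G.Adj b v) (hy : Leaf G S y b) (hD : Diam G S q w y) : False := by
  have hsym : ∀ u v, G.Adj u v → G.Adj v u := fun _ _ h => h.symm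
  have hirr : ∀ v, ¬ G.Adj v v := fun _ => G.irrefl
  have hwl : NL G S w := by obtain ⟨_, _, _, _, _, _, _, _, _, _, h⟩ := hD; exact h
  have hwU : InU G S w := by obtain ⟨_, _, _, _, _, _, _, _, _, h, _⟩ := hD; exact h
  have hwv : w ≠ v := by
    rintro rfl
    exact c.f1 hk hu hu3 hb hb' hwU h hwl
  have hwv' : ¬ G.Adj w v := fun h => c.b4 hwU hv h hwl
  have huq : ∀ t, G.Adj t w → G.Adj t v → False := fun t h1 h2 => hwv (c.uniqU hwU hv h1 h2)
  obtain ⟨u1, u2, hun⟩ := c.nb1 (show G.Adj u k by grind [Nb])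
  obtain ⟨v1, v2, hvn⟩ := c.nb1 h.symm
  obtain ⟨r, q1, q2, t1, t2, e, ke, e3, hd⟩ := c.dp hD
  obtain ⟨r', hyn, hrS'⟩ := c.leaf_nb' hy (by grind [DP]) (show G.Adj y q by grind [DP, Nb])
  have hbn := c.nb3 hb.2.2.1 h hy.2.2.1.symm (by grind [Priv, InU]) (by grind [Priv, InU, Nb, Leaf]) (by grind [InU, Nb])
  clear hD
  unfold DP Nb Priv InU NL Leaf at *
  refine c.flip1 [b, y, w] [k, u, q] [v, w] [b'] (by simp) ?_ ?_ ?_ ?_ ?_ ?_ ?_ ?_ ?_ <;>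
    simp only [List.mem_cons, List.not_mem_nil, or_false, forall_eq_or_imp, forall_eq,
      List.nodup_cons, List.nodup_nil, not_or, false_or, not_false_eq_true, and_true, true_and] <;>
    (repeat' apply And.intro) <;> grind (splits := 20)

end RD
end PartC

section PartD
open Classical
set_option linter.unusedSectionVars false
namespace RD
variable {V : Type} [Fintype V] {G : SimpleGraph V} {S : Finset V}

theorem Ctx.si (_c : Ctx G S) : (∀ u v, G.Adj u v → G.Adj v u) ∧ ∀ v, ¬ G.Adj v v :=
  ⟨fun _ _ h => h.symm, fun _ => G.irrefl⟩

/-- a leafless undominated vertex is at distance at least three from the others -/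
theorem Ctx.sep (c : Ctx G S) {w v : V} (hw : InU G S w) (hl : NL G S w) (hv : InU G S v)
    (hne : w ≠ v) : ¬ G.Adj w v ∧ ¬ G.Adj v w ∧ ∀ t, G.Adj t w → G.Adj t v → False :=
  ⟨fun h => c.b4 hw hv h hl, fun h => c.b4 hw hv h.symm hl,
    fun _ h1 h2 => hne (c.uniqU hw hv h1 h2)⟩

/-- no live leaf at `b` -/
def Quiet (G : SimpleGraph V) (S : Finset V) (b : V) : Prop :=
  ∀ y, Leaf G S y b → ∃ q w, Diam G S q w y

theorem Diam.top {q w y : V} (h : Diam G S q w y) : InU G S w ∧ NL G S w := by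
  obtain ⟨_, _, _, _, _, _, _, _, _, h1, h2⟩ := h
  exact ⟨h1, h2⟩

/-- the neighbourhood of a dead leaf -/
theorem Ctx.dead (c : Ctx G S) {b y q w : V} (hy : Leaf G S y b) (hD : Diam G S q w y) :
    ∃ r q1 q2 t1 t2 e ke e3, DP G S q w y r q1 q2 t1 t2 e ke e3 ∧ Nb G y b q r ∧ b ∉ S := by
  obtain ⟨r, q1, q2, t1, t2, e, ke, e3, hd⟩ := c.dp hD
  refine ⟨r, q1, q2, t1, t2, e, ke, e3, hd, ?_, hy.2.1⟩
  refine c.nb3 hy.2.2.1 ?_ ?_ ?_ ?_ ?_ <;> unfold DP Nb Leaf at * <;> grind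

theorem quiet_cases {b : V} (hb : b ∉ S) (h : Quiet G S b) :
    NL G S b ∨ ∃ y q w, Leaf G S y b ∧ Diam G S q w y := by
  by_cases hl : NL G S b
  · exact Or.inl hl
  · obtain ⟨y, hy⟩ := not_NL hb hl
    obtain ⟨q, w, h⟩ := h y hy
    exact Or.inr ⟨y, q, w, hy, h⟩

/-- `k` without `S`-neighbours and exactly one private neighbour -/
theorem Ctx.s0p1 (c : Ctx G S) {k b x x' w s s' : V} (hk : Nb G k b x x') (hb : Priv G S k b)
    (hx : x ∉ S ∧ G.Adj x s ∧ s ∈ S ∧ s ≠ k) (hx' : x' ∉ S ∧ G.Adj x' s' ∧ s' ∈ S ∧ s' ≠ k)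
    (hw : InU G S w) (hl : NL G S w) (h : G.Adj b w) (hq : Quiet G S b) : False := by
  have hS := c.si
  obtain ⟨w1, w2, hwn⟩ := c.nb1 h.symm
  rcases quiet_cases hb.2.1 hq with hbl | ⟨y, q, w', hy, hD⟩
  · unfold Nb Priv InU NL at *
    refine c.flip1 [b] [k] [w] [] (by simp) ?_ ?_ ?_ ?_ ?_ ?_ ?_ ?_ ?_ <;>
      simp only [List.mem_cons, List.not_mem_nil, or_false, forall_eq_or_imp, forall_eq, List.nodup_cons,
        List.nodup_nil, not_or, false_or, not_false_eq_true, and_true, true_and] <;>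
      (repeat' apply And.intro) <;> grind (splits := 20)
  have ⟨hwU', hwl'⟩ := hD.top
  obtain ⟨r, q1, q2, t1, t2, e, ke, e3, hd⟩ := c.dead hy hD
  have hbn := c.nb3 hb.2.2.1 h hy.2.2.1.symm (by grind [Priv, InU]) (by grind [Priv, Leaf])
    (by grind [InU, Nb, DP])
  by_cases hww : w' = w
  · subst hww
    clear hD
    unfold DP Nb Priv InU NL Leaf at *
    have hbe : e = b := by grind
    subst hbe
    have hkk : ke = k := by grind
    subst hkk
    by_cases hr : r = ke
    · subst hr
      refine c.flip1 [w', y] [q, r] [w'] [] (by simp) ?_ ?_ ?_ ?_ ?_ ?_ ?_ ?_ ?_ <;>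
        simp only [List.mem_cons, List.not_mem_nil, or_false, forall_eq_or_imp, forall_eq, List.nodup_cons,
          List.nodup_nil, not_or, false_or, not_false_eq_true, and_true, true_and] <;>
        (repeat' apply And.intro) <;> grind (splits := 20)
    · refine c.flip2 [w'] [q, ke] [w'] [q, ke] (by simp) (by simp) ?_ ?_ ?_ ?_ ?_ ?_ ?_ ?_ ?_ <;>
        simp only [List.mem_cons, List.not_mem_nil, or_false, forall_eq_or_imp, forall_eq, List.nodup_cons,
          List.nodup_nil, not_or, false_or, not_false_eq_true, and_true, true_and] <;>
        (repeat' apply And.intro) <;> grind (splits := 20)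
  · have hsep := c.sep hwU' hwl' hw hww
    clear hD
    unfold DP Nb Priv InU NL Leaf at *
    refine c.flip1 [b, y, w'] [k, q] [w, w'] [] (by simp) ?_ ?_ ?_ ?_ ?_ ?_ ?_ ?_ ?_ <;>
      simp only [List.mem_cons, List.not_mem_nil, or_false, forall_eq_or_imp, forall_eq, List.nodup_cons,
        List.nodup_nil, not_or, false_or, not_false_eq_true, and_true, true_and] <;>
      (repeat' apply And.intro) <;> grind (splits := 20)

end RD
end PartD

section PartE
open Classical
set_option linter.unusedSectionVars false
namespace RD
variable {V : Type} [Fintype V] {G : SimpleGraph V} {S : Finset V}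

/-- two private neighbours of `q`, below different leafless vertices, none with a leaf -/
theorem Ctx.s0p2a (c : Ctx G S) {q x q1 q2 r w1 w2 : V} (hq : Nb G q x q1 q2)
    (hx : x ∉ S ∧ G.Adj x r ∧ r ∈ S ∧ r ≠ q) (h1 : Priv G S q q1) (h2 : Priv G S q q2)
    (hw1 : InU G S w1) (hw2 : InU G S w2) (hl1 : NL G S w1) (hl2 : NL G S w2)
    (a1 : G.Adj q1 w1) (a2 : G.Adj q2 w2) (hne : w1 ≠ w2)
    (n1 : NL G S q1) (n2 : NL G S q2) : False := by
  have hS := c.si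
  obtain ⟨c1, hc1⟩ := c.nb2 h1.2.2.1 a1 (by grind [Priv, InU])
  obtain ⟨c2, hc2⟩ := c.nb2 h2.2.2.1 a2 (by grind [Priv, InU])
  obtain ⟨u1, u2, hu⟩ := c.nb1 a1.symm
  obtain ⟨u3, u4, hu'⟩ := c.nb1 a2.symm
  have hsep := c.sep hw1 hl1 hw2 hne
  by_cases ht : ∃ t, G.Adj q1 t ∧ G.Adj q2 t ∧ t ∉ S ∧ ∀ z, G.Adj t z → z ∉ S → z = q1 ∨ z = q2
  · obtain ⟨t, ht⟩ := ht
    unfold Nb Priv InU NL at *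
    refine c.flip1 [q1, w2] [q] [w1, w2] [] (by simp) ?_ ?_ ?_ ?_ ?_ ?_ ?_ ?_ ?_ <;>
      simp only [List.mem_cons, List.not_mem_nil, or_false, forall_eq_or_imp, forall_eq, List.nodup_cons,
        List.nodup_nil, not_or, false_or, not_false_eq_true, and_true, true_and] <;>
      (repeat' apply And.intro) <;> grind (splits := 20)
  · unfold Nb Priv InU NL at *
    refine c.flip1 [q1, q2] [q] [w1, w2] [] (by simp) ?_ ?_ ?_ ?_ ?_ ?_ ?_ ?_ ?_ <;>
      simp only [List.mem_cons, List.not_mem_nil, or_false, forall_eq_or_imp, forall_eq, List.nodup_cons,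
        List.nodup_nil, not_or, false_or, not_false_eq_true, and_true, true_and] <;>
      (repeat' apply And.intro) <;> grind (splits := 20)

set_option maxHeartbeats 1000000 in
/-- the first private neighbour carries a dead leaf whose diamond is not below `w1` -/
theorem Ctx.s0p2b (c : Ctx G S) {q x q1 q2 r w1 w2 y q' w' : V} (hq : Nb G q x q1 q2)
    (hx : x ∉ S ∧ G.Adj x r ∧ r ∈ S ∧ r ≠ q) (h1 : Priv G S q q1) (h2 : Priv G S q q2)
    (hw1 : InU G S w1) (hw2 : InU G S w2) (hl1 : NL G S w1) (hl2 : NL G S w2)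
    (a1 : G.Adj q1 w1) (a2 : G.Adj q2 w2) (hne : w1 ≠ w2)
    (hy : Leaf G S y q1) (hD : Diam G S q' w' y) (hne1 : w' ≠ w1) : False := by
  have hS := c.si
  have hc1 := c.nb3 h1.2.2.1 a1 hy.2.2.1.symm (by grind [Priv, InU]) (by grind [Priv, Leaf])
    (by grind [InU, Diam, Nb, Priv])
  obtain ⟨c2, hc2⟩ := c.nb2 h2.2.2.1 a2 (by grind [Priv, InU])
  obtain ⟨u1, u2, hu⟩ := c.nb1 a1.symm
  obtain ⟨u3, u4, hu'⟩ := c.nb1 a2.symm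
  have hsep := c.sep hw1 hl1 hw2 hne
  have ⟨hwU', hwl'⟩ := hD.top
  have hsep1 := c.sep hwU' hwl' hw1 hne1
  obtain ⟨r', q1', q2', t1, t2, e, ke, e3, hd⟩ := c.dead hy hD
  clear hD
  by_cases hne2 : w' = w2
  · subst hne2
    clear hl1 hl2 hwl' hu'
    unfold DP Nb Priv InU Leaf at *
    refine c.flip1 [q1, y, w'] [q, q'] [w1, w'] [] (by simp) ?_ ?_ ?_ ?_ ?_ ?_ ?_ ?_ ?_ <;>
      simp only [List.mem_cons, List.not_mem_nil, or_false, forall_eq_or_imp, forall_eq, List.nodup_cons,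
        List.nodup_nil, not_or, false_or, not_false_eq_true, and_true, true_and] <;>
      (repeat' apply And.intro) <;> grind (splits := 20)
  have hsep2 := c.sep hwU' hwl' hw2 hne2
  clear hl1 hwl'
  unfold DP Nb Priv InU NL Leaf at *
  refine c.flip1 [q1, y, w', w2] [q, q'] [w1, w2, w'] [] (by simp) ?_ ?_ ?_ ?_ ?_ ?_ ?_ ?_ ?_ <;>
    simp only [List.mem_cons, List.not_mem_nil, or_false, forall_eq_or_imp, forall_eq, List.nodup_cons,
      List.nodup_nil, not_or, false_or, not_false_eq_true, and_true, true_and] <;>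
    (repeat' apply And.intro) <;> grind (splits := 20)

/-- the first one carries a dead leaf below `w1`, the second one no leaf -/
theorem Ctx.s0p2c (c : Ctx G S) {q x q1 q2 r w1 w2 y q' : V} (hq : Nb G q x q1 q2)
    (hx : x ∉ S ∧ G.Adj x r ∧ r ∈ S ∧ r ≠ q) (h1 : Priv G S q q1) (h2 : Priv G S q q2)
    (hw1 : InU G S w1) (hw2 : InU G S w2) (hl1 : NL G S w1) (hl2 : NL G S w2)
    (a1 : G.Adj q1 w1) (a2 : G.Adj q2 w2) (hne : w1 ≠ w2)
    (hy : Leaf G S y q1) (hD : Diam G S q' w1 y) (n2 : NL G S q2) : False := by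
  have hS := c.si
  have hc1 := c.nb3 h1.2.2.1 a1 hy.2.2.1.symm (by grind [Priv, InU]) (by grind [Priv, Leaf])
    (by grind [InU, Diam, Nb, Priv])
  obtain ⟨c2, hc2⟩ := c.nb2 h2.2.2.1 a2 (by grind [Priv, InU])
  obtain ⟨u3, u4, hu'⟩ := c.nb1 a2.symm
  have hsep := c.sep hw1 hl1 hw2 hne
  obtain ⟨r', q1', q2', t1, t2, e, ke, e3, hd⟩ := c.dead hy hD
  clear hD
  unfold DP Nb Priv InU NL Leaf at *
  refine c.flip1 [w1, y, q2] [q, q'] [w1, w2] [] (by simp) ?_ ?_ ?_ ?_ ?_ ?_ ?_ ?_ ?_ <;>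
    simp only [List.mem_cons, List.not_mem_nil, or_false, forall_eq_or_imp, forall_eq, List.nodup_cons,
      List.nodup_nil, not_or, false_or, not_false_eq_true, and_true, true_and] <;>
    (repeat' apply And.intro) <;> grind (splits := 20)

set_option maxHeartbeats 1000000 in
/-- both carry dead leaves, in closed position -/
theorem Ctx.s0p2d (c : Ctx G S) {q x q1 q2 r w1 w2 y q' y' q'' : V} (hq : Nb G q x q1 q2)
    (hx : x ∉ S ∧ G.Adj x r ∧ r ∈ S ∧ r ≠ q) (h1 : Priv G S q q1) (h2 : Priv G S q q2)
    (hw1 : InU G S w1) (hw2 : InU G S w2) (hl1 : NL G S w1) (hl2 : NL G S w2)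
    (a1 : G.Adj q1 w1) (a2 : G.Adj q2 w2) (hne : w1 ≠ w2)
    (hy : Leaf G S y q1) (hD : Diam G S q' w1 y) (hy' : Leaf G S y' q2)
    (hD' : Diam G S q'' w2 y') (hxy : x = y ∨ (x ≠ y ∧ x ≠ y')) : False := by
  have hS := c.si
  have hc1 := c.nb3 h1.2.2.1 a1 hy.2.2.1.symm (by grind [Priv, InU]) (by grind [Priv, Leaf])
    (by grind [InU, Diam, Nb, Priv])
  have hc2 := c.nb3 h2.2.2.1 a2 hy'.2.2.1.symm (by grind [Priv, InU]) (by grind [Priv, Leaf])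
    (by grind [InU, Diam, Nb, Priv])
  have hsep := c.sep hw1 hl1 hw2 hne
  obtain ⟨r', q1', q2', t1, t2, e, ke, e3, hd⟩ := c.dead hy hD
  obtain ⟨r'', q1'', q2'', t1'', t2'', e'', ke'', e3'', hd''⟩ := c.dead hy' hD'
  clear hD hD' hl1 hl2
  unfold DP Nb Priv InU Leaf at *
  rcases hxy with rfl | hxy
  · refine c.flip1 [w1, w2, x] [q', q'', q] [w1, w2] [q''] (by simp) ?_ ?_ ?_ ?_ ?_ ?_ ?_ ?_ ?_ <;>
      simp only [List.mem_cons, List.not_mem_nil, or_false, forall_eq_or_imp, forall_eq, List.nodup_cons,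
        List.nodup_nil, not_or, false_or, not_false_eq_true, and_true, true_and] <;>
      (repeat' apply And.intro) <;> grind (splits := 20)
  · refine c.flip2 [w1, w2] [q', q'', q] [w1, w2] [q', q'', q] (by simp) (by simp) ?_ ?_ ?_ ?_ ?_ ?_ ?_ ?_ ?_ <;>
      simp only [List.mem_cons, List.not_mem_nil, or_false, forall_eq_or_imp, forall_eq, List.nodup_cons,
        List.nodup_nil, not_or, false_or, not_false_eq_true, and_true, true_and] <;>
      (repeat' apply And.intro) <;> grind (splits := 20)

theorem Ctx.s0p2 (c : Ctx G S) {q x q1 q2 r w1 w2 : V} (hq : Nb G q x q1 q2)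
    (hx : x ∉ S ∧ G.Adj x r ∧ r ∈ S ∧ r ≠ q) (h1 : Priv G S q q1) (h2 : Priv G S q q2)
    (hw1 : InU G S w1) (hw2 : InU G S w2) (hl1 : NL G S w1) (hl2 : NL G S w2)
    (a1 : G.Adj q1 w1) (a2 : G.Adj q2 w2) (hne : w1 ≠ w2)
    (n1 : Quiet G S q1) (n2 : Quiet G S q2) : False := by
  have hq' := hq.swap
  rcases quiet_cases h1.2.1 n1 with n1 | ⟨y, q', w, hy, hD⟩ <;>
  rcases quiet_cases h2.2.1 n2 with n2 | ⟨y', q'', w'', hy', hD'⟩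
  · exact c.s0p2a hq hx h1 h2 hw1 hw2 hl1 hl2 a1 a2 hne n1 n2
  · by_cases hw : w'' = w2
    · subst hw
      exact c.s0p2c hq' hx h2 h1 hw2 hw1 hl2 hl1 a2 a1 hne.symm hy' hD' n1
    · exact c.s0p2b hq' hx h2 h1 hw2 hw1 hl2 hl1 a2 a1 hne.symm hy' hD' hw
  · by_cases hw : w = w1
    · subst hw
      exact c.s0p2c hq hx h1 h2 hw1 hw2 hl1 hl2 a1 a2 hne hy hD n2
    · exact c.s0p2b hq hx h1 h2 hw1 hw2 hl1 hl2 a1 a2 hne hy hD hw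
  · by_cases hw' : w'' = w2
    · by_cases hw : w = w1
      · subst hw hw'
        by_cases hxy : x = y'
        · exact c.s0p2d hq' hx h2 h1 hw2 hw1 hl2 hl1 a2 a1 hne.symm hy' hD' hy hD (Or.inl hxy)
        · exact c.s0p2d hq hx h1 h2 hw1 hw2 hl1 hl2 a1 a2 hne hy hD hy' hD' (by grind)
      · exact c.s0p2b hq hx h1 h2 hw1 hw2 hl1 hl2 a1 a2 hne hy hD hw
    · exact c.s0p2b hq' hx h2 h1 hw2 hw1 hl2 hl1 a2 a1 hne.symm hy' hD' hw'

end RD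
end PartE

section PartF
open Classical
set_option linter.unusedSectionVars false
namespace RD
variable {V : Type} [Fintype V] {G : SimpleGraph V} {S : Finset V}

set_option maxHeartbeats 1000000 in
/-- `k` has a private neighbour `b` below a leafless `w` and a private neighbour `z` below
another undominated vertex; if `z` has no live leaf then there is an exceptional vertex. -/
theorem Ctx.exc (c : Ctx G S) {k m b z w v v2 r : V} (hk : Nb G k m b z)
    (hm : m ∈ S ∨ (InU G S v ∧ Leaf G S m v ∧ r ∈ S ∧ G.Adj m r ∧ r ≠ k))
    (hb : Priv G S k b) (hz : Priv G S k z) (hw : InU G S w) (hl : NL G S w)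
    (hv2 : InU G S v2) (hl2 : ¬ NL G S v2) (a1 : G.Adj b w) (a2 : G.Adj z v2)
    (hnd : ∀ q y, ¬ Diam G S q w y) (hq : Quiet G S z) :
    NL G S z ∧ ∃ x, G.Adj x w ∧ G.Adj x z ∧ x ∉ S ∧ ¬ G.Adj x k ∧
      ∀ t, G.Adj x t → t ∉ S → t = w ∨ t = z := by
  have hS := c.si
  have hne : w ≠ v2 := by rintro rfl; exact hl2 hl
  have hsep := c.sep hw hl hv2 hne
  obtain ⟨u1, u2, hu⟩ := c.nb1 a1.symm
  obtain ⟨u3, u4, hu'⟩ := c.nb1 a2.symm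
  rcases quiet_cases hz.2.1 hq with n | ⟨y, q, w', hy, hD⟩
  · refine ⟨n, ?_⟩
    by_contra ht
    obtain ⟨z3, hzn⟩ := c.nb2 hz.2.2.1 a2 (by grind [Priv, InU])
    clear hl2 hnd hq
    unfold Nb Priv InU NL Leaf at *
    refine c.flip1 [w, z] [k] [w, v2] [] (by simp) ?_ ?_ ?_ ?_ ?_ ?_ ?_ ?_ ?_ <;>
      simp only [List.mem_cons, List.not_mem_nil, or_false, forall_eq_or_imp, forall_eq, List.nodup_cons,
        List.nodup_nil, not_or, false_or, not_false_eq_true, and_true, true_and] <;>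
      (repeat' apply And.intro) <;> grind (splits := 20)
  · exfalso
    have hne' : w' ≠ w := by rintro rfl; exact hnd _ _ hD
    have ⟨hwU', hwl'⟩ := hD.top
    have hne2 : w' ≠ v2 := by rintro rfl; exact hl2 hwl'
    have hsep1 := c.sep hwU' hwl' hw hne'
    have hsep2 := c.sep hwU' hwl' hv2 hne2
    have hzn := c.nb3 hz.2.2.1 a2 hy.2.2.1.symm (by grind [Priv, InU]) (by grind [Priv, Leaf])
      (by grind [InU, Diam, Nb, Priv])
    obtain ⟨r', q1', q2', t1, t2, e, ke, e3, hd⟩ := c.dead hy hD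
    clear hD hl2 hnd hq hwl'
    unfold DP Nb Priv InU NL Leaf at *
    refine c.flip1 [w, z, y, w'] [k, q] [w, v2, w'] [] (by simp) ?_ ?_ ?_ ?_ ?_ ?_ ?_ ?_ ?_ <;>
      simp only [List.mem_cons, List.not_mem_nil, or_false, forall_eq_or_imp, forall_eq, List.nodup_cons,
        List.nodup_nil, not_or, false_or, not_false_eq_true, and_true, true_and] <;>
      (repeat' apply And.intro) <;> grind (splits := 20)

set_option maxHeartbeats 1000000 in
/-- a vertex next to a leaf of an undominated vertex -/
theorem Ctx.gt (c : Ctx G S) {g a b z w v v2 : V} (hg : Nb G g a b z)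
    (hv : InU G S v) (ha : Leaf G S a v)
    (hb : Priv G S g b) (hz : Priv G S g z) (hw : InU G S w) (hl : NL G S w)
    (hv2 : InU G S v2) (hl2 : ¬ NL G S v2) (a1 : G.Adj b w) (a2 : G.Adj z v2)
    (hqb : Quiet G S b) (hq : Quiet G S z) : False := by
  have hnd : ∀ q y, ¬ Diam G S q w y := fun q y hD => c.dm1c hD hv ha hb.1 hg hb hz a1
  obtain ⟨r, hr, hrS⟩ := c.leaf_nb' ha hb.1 (by grind [Nb])
  obtain ⟨nz, x, x1, x2, x3, -, x4⟩ := c.exc hg (v := v) (r := r)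
    (Or.inr ⟨hv, ha, hrS, by grind [Nb], by grind [Nb]⟩) hb hz hw hl hv2 hl2 a1 a2 hnd hq
  have hS := c.si
  have hne : w ≠ v2 := by rintro rfl; exact hl2 hl
  have hsep := c.sep hw hl hv2 hne
  obtain ⟨u1, u2, hu⟩ := c.nb1 a1.symm
  obtain ⟨u3, u4, hu'⟩ := c.nb1 a2.symm
  have hzn := c.nb3 hz.2.2.1 a2 x2.symm (by grind [Priv, InU]) (by grind [Priv])
    (by grind [InU])
  rcases quiet_cases hb.2.1 hqb with n | ⟨y, q, w', hy, hD⟩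
  · obtain ⟨b3, hbn⟩ := c.nb2 hb.2.2.1 a1 (by grind [Priv, InU])
    clear hl2 hnd hq hqb
    unfold Nb Priv InU NL Leaf at *
    refine c.flip1 [b, z] [g] [w, v2] [] (by simp) ?_ ?_ ?_ ?_ ?_ ?_ ?_ ?_ ?_ <;>
      simp only [List.mem_cons, List.not_mem_nil, or_false, forall_eq_or_imp, forall_eq, List.nodup_cons,
        List.nodup_nil, not_or, false_or, not_false_eq_true, and_true, true_and] <;>
      (repeat' apply And.intro) <;> grind (splits := 20)
  · have hne' : w' ≠ w := by rintro rfl; exact hnd _ _ hD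
    have ⟨hwU', hwl'⟩ := hD.top
    have hne2 : w' ≠ v2 := by rintro rfl; exact hl2 hwl'
    have hsep1 := c.sep hwU' hwl' hw hne'
    have hsep2 := c.sep hwU' hwl' hv2 hne2
    have hbn := c.nb3 hb.2.2.1 a1 hy.2.2.1.symm (by grind [Priv, InU]) (by grind [Priv, Leaf])
      (by grind [InU, Diam, Nb, Priv])
    obtain ⟨r', q1', q2', t1, t2, e, ke, e3, hd⟩ := c.dead hy hD
    clear hD hl2 hnd hq hqb hwl' hl
    unfold DP Nb Priv InU NL Leaf at *
    refine c.flip1 [b, z, y, w'] [g, q] [w, v2, w'] [] (by simp) ?_ ?_ ?_ ?_ ?_ ?_ ?_ ?_ ?_ <;>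
      simp only [List.mem_cons, List.not_mem_nil, or_false, forall_eq_or_imp, forall_eq, List.nodup_cons,
        List.nodup_nil, not_or, false_or, not_false_eq_true, and_true, true_and] <;>
      (repeat' apply And.intro) <;> grind (splits := 20)

end RD
end PartF

section PartG
open Classical
set_option linter.unusedSectionVars false
namespace RD
variable {V : Type} [Fintype V] {G : SimpleGraph V} {S : Finset V}

/-- the data of a special vertex `x` targeting `k` -/
def SpD (G : SimpleGraph V) (S : Finset V) (k x m b z w v2 kx : V) : Prop :=
  m ∈ S ∧ Nb G k m b z ∧ Priv G S k b ∧ Priv G S k z ∧ InU G S w ∧ NL G S w ∧ InU G S v2 ∧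
  ¬ NL G S v2 ∧ G.Adj b w ∧ Nb G z k v2 x ∧ Nb G x w z kx ∧ Priv G S kx x ∧ NL G S z ∧
  Quiet G S b ∧ kx ≠ k

def Sp (G : SimpleGraph V) (S : Finset V) (k x : V) : Prop :=
  ∃ m b z w v2 kx, SpD G S k x m b z w v2 kx

/-- a quiet pair vertex is the target of a special vertex -/
theorem Ctx.pair_sp (c : Ctx G S) {k m b z w v2 : V} (hk : Nb G k m b z) (hm : m ∈ S)
    (hb : Priv G S k b) (hz : Priv G S k z) (hw : InU G S w) (hl : NL G S w)
    (hv2 : InU G S v2) (hl2 : ¬ NL G S v2) (a1 : G.Adj b w) (a2 : G.Adj z v2)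
    (hqb : Quiet G S b) (hq : Quiet G S z) : ∃ x, Sp G S k x := by
  have hnd : ∀ q y, ¬ Diam G S q w y := fun q y hD => c.dm1a hD hm hk hb hz a1
  obtain ⟨nz, x, x1, x2, x3, x5, x4⟩ := c.exc hk (v := m) (r := m)
    (Or.inl hm) hb hz hw hl hv2 hl2 a1 a2 hnd hq
  have hwz : w ≠ z := by
    rintro rfl
    exact hw.2 _ hz.2.2.1 hz.1
  have hS := c.si
  have hxv : x ≠ v2 := by
    rintro rfl
    have := x4 w
    exact (c.b4 hw hv2 x1.symm hl)
  obtain ⟨kx, hx⟩ := c.nb2 x1 x2 hwz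
  have hzn := c.nb3 hz.2.2.1 a2 x2.symm (by grind [Priv, InU]) (by grind [Priv]) hxv.symm
  refine ⟨x, m, b, z, w, v2, kx, hm, hk, hb, hz, hw, hl, hv2, hl2, a1, hzn, hx, ?_, nz, hqb, ?_⟩
    <;> unfold Nb Priv InU at * <;> grind

theorem Ctx.sp_uniq (c : Ctx G S) {k k' x : V} (h : Sp G S k x) (h' : Sp G S k' x) : k = k' := by
  obtain ⟨m, b, z, w, v2, kx, h1, h2, h3, h4, h5, h6, h7, h8, h9, h10, h11, h12, h13, h14, h15⟩ := h
  obtain ⟨m', b', z', w', v2', kx', i1, i2, i3, i4, i5, i6, i7, i8, i9, i10, i11, i12, i13, i14,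
    i15⟩ := h'
  have : w = w' := c.uniqU h5 i5 (t := x) (by grind [Nb]) (by grind [Nb])
  subst this
  have : z = z' := by grind [Nb, Priv, InU]
  subst this
  grind [Nb, Priv]

/-- a special vertex not owned by the mate of its target is owned by a vertex without
`S`-neighbours all of whose neighbours are private -/
theorem Ctx.sp_own1 (c : Ctx G S) {k x m b z w v2 kx mx x1 : V} (h : SpD G S k x m b z w v2 kx)
    (hkx : Nb G kx mx x x1) (hmx : mx ∈ S) : kx = m := by
  by_contra hne
  have hS := c.si
  obtain ⟨h1, h2, h3, h4, h5, h6, h7, h8, h9, h10, h11, h12, h13, h14, h15⟩ := h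
  obtain ⟨u1, u2, hu⟩ := c.nb1 h9.symm
  have hsep := c.sep h5 h6 h7 (by rintro rfl; exact h8 h6)
  obtain ⟨u3, u4, hu'⟩ := c.nb1 (show G.Adj v2 z by grind [Nb])
  clear h8 h14
  unfold Nb Priv InU NL at *
  refine c.flip1 [w, z] [k, kx] [w, v2] [x1] (by simp) ?_ ?_ ?_ ?_ ?_ ?_ ?_ ?_ ?_ <;>
    simp only [List.mem_cons, List.not_mem_nil, or_false, forall_eq_or_imp, forall_eq, List.nodup_cons,
      List.nodup_nil, not_or, false_or, not_false_eq_true, and_true, true_and] <;>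
    (repeat' apply And.intro) <;> grind (splits := 20)

theorem Ctx.sp_own2 (c : Ctx G S) {k x m b z w v2 kx n x1 s : V}
    (h : SpD G S k x m b z w v2 kx) (hkx : Nb G kx x x1 n) (hx1 : x1 ∉ S)
    (hn : n ∉ S ∧ G.Adj n s ∧ s ∈ S ∧ s ≠ kx) : False := by
  have hS := c.si
  obtain ⟨h1, h2, h3, h4, h5, h6, h7, h8, h9, h10, h11, h12, h13, h14, h15⟩ := h
  obtain ⟨u1, u2, hu⟩ := c.nb1 h9.symm
  clear h8 h14 h6 h13
  unfold Nb Priv InU at *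
  refine c.flip2 [x] [k, kx] [w] [b, x1] (by simp) (by simp) ?_ ?_ ?_ ?_ ?_ ?_ ?_ ?_ ?_ <;>
    simp only [List.mem_cons, List.not_mem_nil, or_false, forall_eq_or_imp, forall_eq, List.nodup_cons,
      List.nodup_nil, not_or, false_or, not_false_eq_true, and_true, true_and] <;>
    (repeat' apply And.intro) <;> grind (splits := 20)

theorem Ctx.sp_own (c : Ctx G S) {k x m b z w v2 kx : V} (h : SpD G S k x m b z w v2 kx) :
    kx = m ∨ ∃ x1 x2, Nb G kx x x1 x2 ∧ Priv G S kx x1 ∧ Priv G S kx x2 := by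
  have hx : Priv G S kx x := h.2.2.2.2.2.2.2.2.2.2.2.1
  by_cases h0 : ∃ t, G.Adj kx t ∧ t ∈ S
  · obtain ⟨t, h1, h2⟩ := h0
    obtain ⟨b1, z1, g1, g2, g3⟩ := c.b1 hx.1 h2 hx.2.1 h1 hx.2.2.1.symm
    left
    have : x = b1 ∨ x = z1 := by have := hx.2.2.1.symm; grind [Nb, Priv]
    rcases this with rfl | rfl
    · exact c.sp_own1 h g1 h2
    · exact c.sp_own1 h g1.swap h2
  · push Not at h0
    obtain ⟨x1, x2, hn⟩ := c.nb1 hx.2.2.1.symm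
    have e1 := h0 x1 (by grind [Nb])
    have e2 := h0 x2 (by grind [Nb])
    right
    refine ⟨x1, x2, hn, ?_, ?_⟩
    · refine ⟨hx.1, e1, by grind [Nb], fun s a1 a2 => ?_⟩
      by_contra hs
      exact c.sp_own2 h hn.swap e2 ⟨e1, a1, a2, hs⟩
    · refine ⟨hx.1, e2, by grind [Nb], fun s a1 a2 => ?_⟩
      by_contra hs
      exact c.sp_own2 h hn e1 ⟨e2, a1, a2, hs⟩

set_option maxHeartbeats 1000000 in
/-- a special vertex owned by the mate: the other private vertex has a live leaf -/
theorem Ctx.sp_m1 (c : Ctx G S) {k x m b z w v2 x' : V} (h : SpD G S k x m b z w v2 m)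
    (hm : Nb G m k x x') (hx' : Priv G S m x') (hq : Quiet G S x') : False := by
  have hS := c.si
  obtain ⟨h1, h2, h3, h4, h5, h6, h7, h8, h9, h10, h11, h12, h13, h14, h15⟩ := h
  obtain ⟨u1, u2, hu⟩ := c.nb1 h9.symm
  have hne : w ≠ v2 := by rintro rfl; exact h8 h6
  have hsep := c.sep h5 h6 h7 hne
  obtain ⟨u3, u4, hu'⟩ := c.nb1 (show G.Adj v2 z by grind [Nb])
  have hnd : ∀ q y, ¬ Diam G S q w y := fun q y hD => c.dm1a hD h1 h2 h3 h4 h9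
  have hxw : ¬ G.Adj x' w := fun hh =>
    c.p1 h3.1 hm h12 hx' h5 h5 (by grind [Nb]) hh h6 h6
  obtain ⟨p1, p2, hxn⟩ := c.nb1 hx'.2.2.1
  obtain ⟨bs, hbn⟩ := c.nb2 h3.2.2.1 h9 (by grind [Priv, InU])
  rcases quiet_cases hx'.2.1 hq with n | ⟨y, q, w', hy, hD⟩
  · rcases quiet_cases h3.2.1 h14 with n' | ⟨y, q, w', hy, hD⟩
    · by_cases ht : G.Adj bs x' ∧ bs ∉ S ∧ ∀ t, G.Adj bs t → t ∉ S → t = b ∨ t = x'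
      · clear h8 h14 hnd hq
        unfold Nb Priv InU NL at *
        refine c.flip1 [x, z, bs] [k, m] [w, v2] [] (by simp) ?_ ?_ ?_ ?_ ?_ ?_ ?_ ?_ ?_ <;>
          simp only [List.mem_cons, List.not_mem_nil, or_false, forall_eq_or_imp, forall_eq, List.nodup_cons,
            List.nodup_nil, not_or, false_or, not_false_eq_true, and_true, true_and] <;>
          (repeat' apply And.intro) <;> grind (splits := 20)
      · clear h8 h14 hnd hq h6 h13
        unfold Nb Priv InU NL at *
        refine c.flip1 [b, z, x'] [k, m] [w, v2] [] (by simp) ?_ ?_ ?_ ?_ ?_ ?_ ?_ ?_ ?_ <;>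
          simp only [List.mem_cons, List.not_mem_nil, or_false, forall_eq_or_imp, forall_eq, List.nodup_cons,
            List.nodup_nil, not_or, false_or, not_false_eq_true, and_true, true_and] <;>
          (repeat' apply And.intro) <;> grind (splits := 20)
    · have hne' : w' ≠ w := by rintro rfl; exact hnd _ _ hD
      have ⟨hwU', hwl'⟩ := hD.top
      have hne2 : w' ≠ v2 := by rintro rfl; exact h8 hwl'
      have hsep1 := c.sep hwU' hwl' h5 hne'
      have hsep2 := c.sep hwU' hwl' h7 hne2
      obtain ⟨r', q1', q2', t1, t2, e, ke, e3, hd⟩ := c.dead hy hD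
      clear hD h8 hnd hq h14 hwl' h6 h13 n
      unfold DP Nb Priv InU Leaf at *
      refine c.flip1 [x, z, y, w'] [k, m, q] [w, v2, w'] [x'] (by simp) ?_ ?_ ?_ ?_ ?_ ?_ ?_ ?_ ?_ <;>
        simp only [List.mem_cons, List.not_mem_nil, or_false, forall_eq_or_imp, forall_eq, List.nodup_cons,
          List.nodup_nil, not_or, false_or, not_false_eq_true, and_true, true_and] <;>
        (repeat' apply And.intro) <;> grind (splits := 20)
  · have hne' : w' ≠ w := by rintro rfl; exact hnd _ _ hD
    have ⟨hwU', hwl'⟩ := hD.top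
    have hne2 : w' ≠ v2 := by rintro rfl; exact h8 hwl'
    have hsep1 := c.sep hwU' hwl' h5 hne'
    have hsep2 := c.sep hwU' hwl' h7 hne2
    obtain ⟨r', q1', q2', t1, t2, e, ke, e3, hd⟩ := c.dead hy hD
    clear hD h8 hnd hq h14 hwl' h6 h13
    unfold DP Nb Priv InU Leaf at *
    refine c.flip1 [x, z, y, w'] [k, m, q] [w, v2, w'] [b] (by simp) ?_ ?_ ?_ ?_ ?_ ?_ ?_ ?_ ?_ <;>
      simp only [List.mem_cons, List.not_mem_nil, or_false, forall_eq_or_imp, forall_eq, List.nodup_cons,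
        List.nodup_nil, not_or, false_or, not_false_eq_true, and_true, true_and] <;>
      (repeat' apply And.intro) <;> grind (splits := 20)

set_option maxHeartbeats 1000000 in
/-- if the other private vertex is asked, then the `S`-neighbours of its leaf have two private
neighbours -/
theorem Ctx.sp_m2 (c : Ctx G S) {k x m b z w v2 x' v3 y q : V} (h : SpD G S k x m b z w v2 m)
    (hm : Nb G m k x x') (hx' : Priv G S m x') (hv3 : InU G S v3) (a3 : G.Adj x' v3)
    (hy : Leaf G S y x') (hq : q ∈ S) (hyq : G.Adj y q) :
    ∃ q1 q2, Nb G q y q1 q2 ∧ Priv G S q q1 ∧ Priv G S q q2 := by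
  have hS := c.si
  obtain ⟨h1, h2, h3, h4, h5, h6, h7, h8, h9, h10, h11, h12, h13, h14, h15⟩ := h
  have hne : w ≠ v2 := by rintro rfl; exact h8 h6
  have hl3 : ¬ NL G S v3 := fun hl3 =>
    c.p1 h3.1 hm h12 hx' h5 hv3 (by grind [Nb]) a3 h6 hl3
  have hne3 : w ≠ v3 := by rintro rfl; exact hl3 h6
  have hsep := c.sep h5 h6 h7 hne
  have hsep3 := c.sep h5 h6 hv3 hne3
  obtain ⟨u1, u2, hu⟩ := c.nb1 h9.symm
  obtain ⟨u3, u4, hu'⟩ := c.nb1 (show G.Adj v2 z by grind [Nb])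
  obtain ⟨u5, u6, hu3⟩ := c.nb1 a3.symm
  obtain ⟨r, hr, hrS⟩ := c.leaf_nb' hy hq hyq
  have hyU : y ≠ v3 := by
    rintro rfl
    exact hv3.2 _ hyq hq
  have hxn := c.nb3 hx'.2.2.1 a3 hy.2.2.1.symm (by grind [Priv, InU]) (by grind [Priv, Leaf])
    hyU.symm
  by_cases h23 : v3 = v2
  · subst h23
    obtain ⟨q1, q2, hn, hp1, hp2⟩ := c.leaf_priv hy hq hyq
    have hs0 := c.leaf_s0 hy hq hyq
    refine ⟨q1, q2, hn, hp1, ?_⟩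
    by_contra hcon
    have : ∃ s, G.Adj q2 s ∧ s ∈ S ∧ s ≠ q := by
      by_contra hc
      push Not at hc
      exact hcon ⟨hq, hp2, by grind [Nb], hc⟩
    obtain ⟨s, hs⟩ := this
    clear hl3 h8 h14 hcon h6 h13
    unfold Nb Priv InU Leaf at *
    refine c.flip3 [x, z, y] [k, m, q] [w, v3] [b, q1] [(k, m), (m, k)] [(x, z), (z, x), (y, r), (r, y)] (by simp) (by simp) (by simp) ?_ ?_ ?_ ?_ ?_ ?_ ?_ ?_ ?_ ?_ ?_ ?_ <;>
      simp only [List.mem_cons, List.not_mem_nil, or_false, forall_eq_or_imp, forall_eq, List.nodup_cons,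
        List.nodup_nil, not_or, false_or, not_false_eq_true, and_true, true_and] <;>
      (repeat' apply And.intro) <;> grind (splits := 20)
  · exfalso
    have hu23 : ∀ t, G.Adj t v2 → G.Adj t v3 → False := fun t a b => h23 (c.uniqU hv3 h7 b a)
    clear hl3 h8 h14
    unfold Nb Priv InU NL Leaf at *
    refine c.flip1 [w, z, x', y] [k, m] [w, v2, v3] [] (by simp) ?_ ?_ ?_ ?_ ?_ ?_ ?_ ?_ ?_ <;>
      simp only [List.mem_cons, List.not_mem_nil, or_false, forall_eq_or_imp, forall_eq, List.nodup_cons,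
        List.nodup_nil, not_or, false_or, not_false_eq_true, and_true, true_and] <;>
      (repeat' apply And.intro) <;> grind (splits := 20)

end RD
end PartG

section PartH
open Classical
set_option linter.unusedSectionVars false
namespace RD
variable {V : Type} [Fintype V] {G : SimpleGraph V} {S : Finset V}

set_option maxHeartbeats 1000000 in
/-- three private neighbours below leafless vertices, one of them special -/
theorem Ctx.p3a (c : Ctx G S) {k x m b z w v2 kx x1 x2 w1 w2 : V}
    (h : SpD G S k x m b z w v2 kx) (hkx : Nb G kx x x1 x2) (p1 : Priv G S kx x1)
    (p2 : Priv G S kx x2) (hw1 : InU G S w1) (hl1 : NL G S w1) (hw2 : InU G S w2)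
    (hl2 : NL G S w2) (a1 : G.Adj x1 w1) (a2 : G.Adj x2 w2) : False := by
  have hS := c.si
  obtain ⟨h1, h2, h3, h4, h5, h6, h7, h8, h9, h10, h11, h12, h13, h14, h15⟩ := h
  obtain ⟨u1, u2, hu⟩ := c.nb1 h9.symm
  obtain ⟨u3, u4, hu1⟩ := c.nb1 a1.symm
  obtain ⟨u5, u6, hu2⟩ := c.nb1 a2.symm
  have hs1 := c.sep h5 h6 hw1
  have hs2 := c.sep h5 h6 hw2
  have hs3 := c.sep hw1 hl1 hw2
  by_cases e1 : w = w1
  · subst e1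
    by_cases e2 : w = w2
    · exfalso
      subst e2
      clear h8 h14 hs1 hs2 hs3 h6 hl1 hl2
      unfold Nb Priv InU at *
      grind
    · have hs2 := hs2 e2
      clear h8 h14 hs1 hs3 hl1 h13
      unfold Nb Priv InU NL at *
      refine c.flip1 [x, w, w2] [k, kx] [w, w2] [] (by simp) ?_ ?_ ?_ ?_ ?_ ?_ ?_ ?_ ?_ <;>
        simp only [List.mem_cons, List.not_mem_nil, or_false, forall_eq_or_imp, forall_eq, List.nodup_cons,
          List.nodup_nil, not_or, false_or, not_false_eq_true, and_true, true_and] <;>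
        (repeat' apply And.intro) <;> grind (splits := 20)
  · have hs1 := hs1 e1
    by_cases e2 : w = w2
    · subst e2
      clear h8 h14 hs2 hs3 hl2 h13
      unfold Nb Priv InU NL at *
      refine c.flip1 [x, w, w1] [k, kx] [w, w1] [] (by simp) ?_ ?_ ?_ ?_ ?_ ?_ ?_ ?_ ?_ <;>
        simp only [List.mem_cons, List.not_mem_nil, or_false, forall_eq_or_imp, forall_eq, List.nodup_cons,
          List.nodup_nil, not_or, false_or, not_false_eq_true, and_true, true_and] <;>
        (repeat' apply And.intro) <;> grind (splits := 20)
    · have hs2 := hs2 e2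
      by_cases e3 : w1 = w2
      · subst e3
        clear h8 h14 hs2 hs3 hl2 h13 h6
        unfold Nb Priv InU NL at *
        refine c.flip1 [x, w1] [k, kx] [w, w1] [b] (by simp) ?_ ?_ ?_ ?_ ?_ ?_ ?_ ?_ ?_ <;>
          simp only [List.mem_cons, List.not_mem_nil, or_false, forall_eq_or_imp, forall_eq, List.nodup_cons,
            List.nodup_nil, not_or, false_or, not_false_eq_true, and_true, true_and] <;>
          (repeat' apply And.intro) <;> grind (splits := 20)
      · have hs3 := hs3 e3
        clear h8 h14 h13 h6
        unfold Nb Priv InU NL at *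
        refine c.flip1 [x, w1, w2] [k, kx] [w, w1, w2] [b] (by simp) ?_ ?_ ?_ ?_ ?_ ?_ ?_ ?_ ?_ <;>
          simp only [List.mem_cons, List.not_mem_nil, or_false, forall_eq_or_imp, forall_eq, List.nodup_cons,
            List.nodup_nil, not_or, false_or, not_false_eq_true, and_true, true_and] <;>
          (repeat' apply And.intro) <;> grind (splits := 20)

/-- two special vertices with the same owner -/
theorem Ctx.p3w (c : Ctx G S) {k x m b z w v2 kx k' x' m' b' z' w' v2' : V}
    (h : SpD G S k x m b z w v2 kx) (h' : SpD G S k' x' m' b' z' w' v2' kx) (hne : x ≠ x') :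
    w ≠ w' := by
  rintro rfl
  have hS := c.si
  obtain ⟨h1, h2, h3, h4, h5, h6, h7, h8, h9, h10, h11, h12, h13, h14, h15⟩ := h
  obtain ⟨i1, i2, i3, i4, i5, i6, i7, i8, i9, i10, i11, i12, i13, i14, i15⟩ := h'
  obtain ⟨u1, u2, hu⟩ := c.nb1 h9.symm
  have hu1 : ∀ t, InU G S t → G.Adj z t → t = v2 := fun t a b =>
    c.uniqU (t := z) a h7 b (by grind [Nb])
  have hu2 : ∀ t, InU G S t → G.Adj z' t → t = v2' := fun t a b =>
    c.uniqU (t := z') a i7 b (by grind [Nb])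
  have f1 := hu1 w h5
  have f2 := hu2 w h5
  have g1 : w ≠ v2 := by rintro rfl; exact h8 h6
  have g2 : w ≠ v2' := by rintro rfl; exact i8 h6
  clear h8 h14 h6 h13 i8 i14 i6 i13 hu1 hu2
  unfold Nb Priv InU at *
  grind

set_option maxHeartbeats 4000000 in
theorem Ctx.p3b (c : Ctx G S) {k x m b z w v2 kx x' x2 w' v3 y q w'' : V}
    (h : SpD G S k x m b z w v2 kx) (hkx : Nb G kx x x' x2) (p1 : Priv G S kx x')
    (p2 : Priv G S kx x2) (hw' : InU G S w') (hl' : NL G S w') (a1 : G.Adj x' w')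
    (hw : w ≠ w') (hv3 : InU G S v3) (hl3 : ¬ NL G S v3) (a3 : G.Adj x2 v3)
    (hq : (NL G S x2 ∧ ¬ ∃ t, G.Adj t w' ∧ G.Adj t x2 ∧ t ∉ S ∧
      ∀ u, G.Adj t u → u ∉ S → u = w' ∨ u = x2) ∨
      (Leaf G S y x2 ∧ Diam G S q w'' y ∧ w'' ≠ w')) : False := by
  have hS := c.si
  obtain ⟨h1, h2, h3, h4, h5, h6, h7, h8, h9, h10, h11, h12, h13, h14, h15⟩ := h
  have hnd : ∀ q y, ¬ Diam G S q w y := fun q y hD => c.dm1a hD h1 h2 h3 h4 h9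
  have hne3 : w ≠ v3 := by rintro rfl; exact hl3 h6
  have hne3' : w' ≠ v3 := by rintro rfl; exact hl3 hl'
  have hs1 := c.sep h5 h6 hw' hw
  have hs2 := c.sep h5 h6 hv3 hne3
  have hs3 := c.sep hw' hl' hv3 hne3'
  obtain ⟨u1, u2, hu⟩ := c.nb1 h9.symm
  obtain ⟨u3, u4, hu1⟩ := c.nb1 a1.symm
  obtain ⟨u5, u6, hu2⟩ := c.nb1 a3.symm
  rcases hq with ⟨n, ht⟩ | ⟨hy, hD, hne'⟩
  · obtain ⟨x3, hx3⟩ := c.nb2 p2.2.2.1 a3 (by grind [Priv, InU])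
    clear h8 h14 h6 h13 hl3 hnd
    unfold Nb Priv InU NL at *
    refine c.flip1 [x, w', x2] [k, kx] [w, w', v3] [b] (by simp) ?_ ?_ ?_ ?_ ?_ ?_ ?_ ?_ ?_ <;>
      simp only [List.mem_cons, List.not_mem_nil, or_false, forall_eq_or_imp, forall_eq, List.nodup_cons,
        List.nodup_nil, not_or, false_or, not_false_eq_true, and_true, true_and] <;>
      (repeat' apply And.intro) <;> grind (splits := 40) (ematch := 12) (instances := 6000)
  · have hx3 := c.nb3 p2.2.2.1 a3 hy.2.2.1.symm (by grind [Priv, InU]) (by grind [Priv, Leaf])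
      (by grind [InU, Diam, Nb, Priv])
    have hne'' : w'' ≠ w := by rintro rfl; exact hnd _ _ hD
    have ⟨hwU', hwl'⟩ := hD.top
    have hne2 : w'' ≠ v3 := by rintro rfl; exact hl3 hwl'
    have hsep1 := c.sep hwU' hwl' h5 hne''
    have hsep2 := c.sep hwU' hwl' hv3 hne2
    have hsep3 := c.sep hwU' hwl' hw' hne'
    obtain ⟨r', q1', q2', t1, t2, e, ke, e3, hd⟩ := c.dead hy hD
    clear hD h8 hnd h14 hwl' h6 h13 hl3
    unfold DP Nb Priv InU NL Leaf at *
    refine c.flip1 [x, w', x2, y, w''] [k, kx, q] [w, w', v3, w''] [b] (by simp) ?_ ?_ ?_ ?_ ?_ ?_ ?_ ?_ ?_ <;>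
      simp only [List.mem_cons, List.not_mem_nil, or_false, forall_eq_or_imp, forall_eq, List.nodup_cons,
        List.nodup_nil, not_or, false_or, not_false_eq_true, and_true, true_and] <;>
      (repeat' apply And.intro) <;> grind (splits := 40) (ematch := 12) (instances := 6000)

/-- two special vertices and a quiet asked vertex with the same owner -/
theorem Ctx.p3c (c : Ctx G S) {k x m b z w v2 kx k' x' m' b' z' w' v2' x2 v3 : V}
    (h : SpD G S k x m b z w v2 kx) (h' : SpD G S k' x' m' b' z' w' v2' kx)
    (hkx : Nb G kx x x' x2) (p2 : Priv G S kx x2)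
    (hv3 : InU G S v3) (hl3 : ¬ NL G S v3) (a3 : G.Adj x2 v3) (hq : Quiet G S x2) : False := by
  have hw := c.p3w h h' hkx.1
  have hs := h
  have hs' := h'
  obtain ⟨h1, h2, h3, h4, h5, h6, h7, h8, h9, h10, h11, h12, h13, h14, h15⟩ := hs
  obtain ⟨i1, i2, i3, i4, i5, i6, i7, i8, i9, i10, i11, i12, i13, i14, i15⟩ := hs'
  have hwx : G.Adj x w := by grind [Nb]
  have hwx' : G.Adj x' w' := by grind [Nb]
  have hkx' : Nb G kx x' x x2 := by unfold Nb at *; grind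
  rcases quiet_cases p2.2.1 hq with n | ⟨y, q, w'', hy, hD⟩
  · by_cases ht : ∃ t, G.Adj t w' ∧ G.Adj t x2 ∧ t ∉ S ∧ ∀ u, G.Adj t u → u ∉ S → u = w' ∨ u = x2
    · refine c.p3b h' hkx' h12 p2 h5 h6 hwx hw.symm hv3 hl3 a3 (y := x) (q := x) (w'' := x)
        (Or.inl ⟨n, ?_⟩)
      rintro ⟨t', t1, t2, t3, t4⟩
      obtain ⟨t, s1, s2, s3, s4⟩ := ht
      obtain ⟨x3, hx3⟩ := c.nb2 p2.2.2.1 a3 (by grind [Priv, InU])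
      have hv3t : t ≠ v3 := by
        rintro rfl
        exact c.b4 i5 hv3 s1.symm i6
      have hv3t' : t' ≠ v3 := by
        rintro rfl
        exact c.b4 h5 hv3 t1.symm h6
      have : t = t' := by
        have := s2.symm
        have := t2.symm
        unfold Nb Priv at *
        grind
      subst this
      exact hw (c.uniqU h5 i5 t1 s1)
    · exact c.p3b h hkx i12 p2 i5 i6 hwx' hw hv3 hl3 a3 (y := x) (q := x) (w'' := x)
        (Or.inl ⟨n, ht⟩)
  · refine c.p3b h hkx i12 p2 i5 i6 hwx' hw hv3 hl3 a3 (Or.inr ⟨hy, hD, ?_⟩)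
    rintro rfl
    exact c.dm1a hD i1 i2 i3 i4 i9

end RD
end PartH

section PartI
open Classical
set_option linter.unusedSectionVars false
namespace RD
variable {V : Type} [Fintype V] {G : SimpleGraph V} {S : Finset V}

/-- two adjacent undominated vertices `v`, `v'`; `v` has the leaf `a`, next to `h`, and a third
neighbour `b3`; `h1` and `h2` are the private neighbours of `h` -/
def T2 (G : SimpleGraph V) (S : Finset V) (v a v' b3 g h h1 h2 : V) : Prop :=
  InU G S v ∧ InU G S v' ∧ Nb G v a v' b3 ∧ Leaf G S a v ∧ Nb G a v g h ∧ g ∈ S ∧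
  Nb G h a h1 h2 ∧ Priv G S h h1 ∧ Priv G S h h2 ∧ ¬ Leaf G S b3 v

/-- the exceptional configuration -/
def Ex (G : SimpleGraph V) (S : Finset V) (v b3 h1 : V) : Prop :=
  NL G S h1 ∧ G.Adj b3 h1 ∧ ∀ t, G.Adj b3 t → t ∉ S → t = v ∨ t = h1

theorem T2.swap {v a v' b3 g h h1 h2 : V} (ht : T2 G S v a v' b3 g h h1 h2) :
    T2 G S v a v' b3 g h h2 h1 := by
  obtain ⟨t1, t2, t3, t4, t5, t6, t7, t8, t9, t10⟩ := ht
  exact ⟨t1, t2, t3, t4, t5, t6, t7.swap, t9, t8, t10⟩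

set_option maxHeartbeats 1000000 in
theorem Ctx.t2a (c : Ctx G S) {v a v' b3 g h h1 h2 w : V} (ht : T2 G S v a v' b3 g h h1 h2)
    (hw : InU G S w) (a1 : G.Adj h1 w) (hwv : w ≠ v) (hwv' : w ≠ v') (hq : Quiet G S h1) :
    Ex G S v b3 h1 := by
  have hS := c.si
  obtain ⟨t1, t2, t3, t4, t5, t6, t7, t8, t9, t10⟩ := ht
  have hs1 : ∀ t, G.Adj t w → G.Adj t v → False := fun t a b => hwv (c.uniqU hw t1 a b)
  have hs2 : ∀ t, G.Adj t w → G.Adj t v' → False := fun t a b => hwv' (c.uniqU hw t2 a b)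
  have hs3 : ∀ t, G.Adj t v → G.Adj t v' → False := fun t a b => by
    have := c.uniqU t1 t2 a b
    subst this
    exact hS.2 v (by grind [Nb])
  obtain ⟨u1, u2, hu⟩ := c.nb1 a1.symm
  obtain ⟨u3, u4, hu'⟩ := c.nb1 (show G.Adj v' v by grind [Nb])
  rcases quiet_cases t8.2.1 hq with n | ⟨y, q, w', hy, hD⟩
  · obtain ⟨z3, hzn⟩ := c.nb2 t8.2.2.1 a1 (by grind [Priv, InU])
    refine ⟨n, ?_⟩
    by_contra hcon
    clear hq
    unfold Nb Priv InU NL Leaf at *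
    refine c.flip1 [v, h1] [h] [v, v', w] [h2] (by simp) ?_ ?_ ?_ ?_ ?_ ?_ ?_ ?_ ?_ <;>
      simp only [List.mem_cons, List.not_mem_nil, or_false, forall_eq_or_imp, forall_eq, List.nodup_cons,
        List.nodup_nil, not_or, false_or, not_false_eq_true, and_true, true_and] <;>
      (repeat' apply And.intro) <;> grind (splits := 40) (ematch := 12) (instances := 6000)
  · exfalso
    have ⟨hwU', hwl'⟩ := hD.top
    have hne : w' ≠ w := by
      rintro rfl
      exact c.dm1c hD t1 t4 t8.1 t7 t8 t9 a1
    have hne1 : w' ≠ v := by rintro rfl; exact hwl'.not_leaf t4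
    have hne2 : w' ≠ v' := by
      rintro rfl
      exact c.b4 t2 t1 (by grind [Nb]) hwl'
    have hsep := c.sep hwU' hwl' hw hne
    have hsep1 := c.sep hwU' hwl' t1 hne1
    have hsep2 := c.sep hwU' hwl' t2 hne2
    have hzn := c.nb3 t8.2.2.1 a1 hy.2.2.1.symm (by grind [Priv, InU]) (by grind [Priv, Leaf])
      (by grind [InU, Diam, Nb, Priv])
    obtain ⟨r', q1', q2', t1, t2, e, ke, e3, hd⟩ := c.dead hy hD
    clear hD hq hwl'
    unfold DP Nb Priv InU Leaf at *
    refine c.flip1 [v, h1, y, w'] [h, q] [v, v', w, w'] [h2] (by simp) ?_ ?_ ?_ ?_ ?_ ?_ ?_ ?_ ?_ <;>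
      simp only [List.mem_cons, List.not_mem_nil, or_false, forall_eq_or_imp, forall_eq, List.nodup_cons,
        List.nodup_nil, not_or, false_or, not_false_eq_true, and_true, true_and] <;>
      (repeat' apply And.intro) <;> grind (splits := 40) (ematch := 12) (instances := 6000)

set_option maxHeartbeats 1000000 in
/-- `h` owns the third neighbour of `v` -/
theorem Ctx.t2b (c : Ctx G S) {v a v' g h h1 h2 : V} (ht : T2 G S v a v' h2 g h h1 h2)
    (hq : Quiet G S h1) : False := by
  have hS := c.si
  obtain ⟨t1, t2, t3, t4, t5, t6, t7, t8, t9, t10⟩ := ht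
  have hs3 : ∀ t, G.Adj t v → G.Adj t v' → False := fun t a b => by
    have := c.uniqU t1 t2 a b
    subst this
    exact hS.2 v (by grind [Nb])
  obtain ⟨u3, u4, hu'⟩ := c.nb1 (show G.Adj v' v by grind [Nb])
  rcases quiet_cases t8.2.1 hq with n | ⟨y, q, w', hy, hD⟩
  · obtain ⟨z2, z3, hzn⟩ := c.nb1 t8.2.2.1
    clear hq
    unfold Nb Priv InU NL Leaf at *
    refine c.flip1 [v, h1] [h] [v, v'] [] (by simp) ?_ ?_ ?_ ?_ ?_ ?_ ?_ ?_ ?_ <;>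
      simp only [List.mem_cons, List.not_mem_nil, or_false, forall_eq_or_imp, forall_eq, List.nodup_cons,
        List.nodup_nil, not_or, false_or, not_false_eq_true, and_true, true_and] <;>
      (repeat' apply And.intro) <;> grind (splits := 40) (ematch := 12) (instances := 6000)
  · have ⟨hwU', hwl'⟩ := hD.top
    have hne1 : w' ≠ v := by rintro rfl; exact hwl'.not_leaf t4
    have hne2 : w' ≠ v' := by
      rintro rfl
      exact c.b4 t2 t1 (by grind [Nb]) hwl'
    have hnd : ¬ G.Adj h1 w' := fun a1 => c.dm1c hD t1 t4 t8.1 t7 t8 t9 a1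
    have hsep1 := c.sep hwU' hwl' t1 hne1
    have hsep2 := c.sep hwU' hwl' t2 hne2
    obtain ⟨z3, hzn⟩ := c.nb2 t8.2.2.1 hy.2.2.1.symm (by grind [Priv, Leaf])
    obtain ⟨r', q1', q2', t1, t2, e, ke, e3, hd⟩ := c.dead hy hD
    clear hD hq hwl'
    unfold DP Nb Priv InU Leaf at *
    refine c.flip1 [v, y, w'] [h, q] [v, v', w'] [h] (by simp) ?_ ?_ ?_ ?_ ?_ ?_ ?_ ?_ ?_ <;>
      simp only [List.mem_cons, List.not_mem_nil, or_false, forall_eq_or_imp, forall_eq, List.nodup_cons,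
        List.nodup_nil, not_or, false_or, not_false_eq_true, and_true, true_and] <;>
      (repeat' apply And.intro) <;> grind (splits := 40) (ematch := 12) (instances := 6000)

theorem Ctx.t2c (c : Ctx G S) {v a v' g h h1 h2 w : V} (ht : T2 G S v a v' h2 g h h1 h2)
    (hw : InU G S w) (hl : NL G S w) (a1 : G.Adj h1 w) : False := by
  have hS := c.si
  obtain ⟨t1, t2, t3, t4, t5, t6, t7, t8, t9, t10⟩ := ht
  have hne1 : w ≠ v := by rintro rfl; exact hl.not_leaf t4
  have hne2 : w ≠ v' := by
    rintro rfl
    exact c.b4 t2 t1 (by grind [Nb]) hl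
  have hsep1 := c.sep hw hl t1 hne1
  have hsep2 := c.sep hw hl t2 hne2
  obtain ⟨u3, u4, hu'⟩ := c.nb1 (show G.Adj v' v by grind [Nb])
  obtain ⟨u1, u2, hu⟩ := c.nb1 a1.symm
  unfold Nb Priv InU NL Leaf at *
  refine c.flip1 [v, w] [h] [v, v', w] [h] (by simp) ?_ ?_ ?_ ?_ ?_ ?_ ?_ ?_ ?_ <;>
    simp only [List.mem_cons, List.not_mem_nil, or_false, forall_eq_or_imp, forall_eq, List.nodup_cons,
      List.nodup_nil, not_or, false_or, not_false_eq_true, and_true, true_and] <;>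
    (repeat' apply And.intro) <;> grind (splits := 40) (ematch := 12) (instances := 6000)

theorem Ctx.t2d (c : Ctx G S) {v a v' b3 g h h1 h2 w w1 : V} (ht : T2 G S v a v' b3 g h h1 h2)
    (hw : InU G S w) (hl : NL G S w) (a1 : G.Adj h1 w) (hx : Ex G S v b3 h2)
    (hw1 : InU G S w1) (a2 : G.Adj h2 w1) (hne : w ≠ w1) : False := by
  have hS := c.si
  obtain ⟨t1, t2, t3, t4, t5, t6, t7, t8, t9, t10⟩ := ht
  have hne1 : w ≠ v := by rintro rfl; exact hl.not_leaf t4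
  have hsep1 := c.sep hw hl t1 hne1
  have hsep2 := c.sep hw hl hw1 hne
  obtain ⟨u3, u4, hu'⟩ := c.nb1 a2.symm
  obtain ⟨u1, u2, hu⟩ := c.nb1 a1.symm
  unfold Ex at hx
  have hb3 : b3 ≠ w1 := by
    rintro rfl
    have := c.b6 t1 hw1 t2 (by grind [Nb]) (by grind [Nb])
    grind [Nb]
  have hbn := c.nb3 t9.2.2.1 a2 hx.2.1.symm (by grind [Priv, InU]) (by grind [Priv, Nb, InU])
    hb3.symm
  unfold Nb Priv InU NL Leaf at *
  refine c.flip1 [w, h2] [h] [w, w1] [] (by simp) ?_ ?_ ?_ ?_ ?_ ?_ ?_ ?_ ?_ <;>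
    simp only [List.mem_cons, List.not_mem_nil, or_false, forall_eq_or_imp, forall_eq, List.nodup_cons,
      List.nodup_nil, not_or, false_or, not_false_eq_true, and_true, true_and] <;>
    (repeat' apply And.intro) <;> grind (splits := 40) (ematch := 12) (instances := 6000)

theorem Ctx.t2e (c : Ctx G S) {v a v' b3 g h h1 h2 w y q : V} (ht : T2 G S v a v' b3 g h h1 h2)
    (hw : InU G S w) (hl : NL G S w) (a1 : G.Adj h1 w) (a2 : G.Adj h2 v') (hq : Quiet G S h2)
    (hy : Leaf G S y h1) (hqS : q ∈ S) (hyq : G.Adj y q) :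
    ∃ q1 q2, Nb G q y q1 q2 ∧ Priv G S q q1 ∧ Priv G S q q2 := by
  have hS := c.si
  obtain ⟨t1, t2, t3, t4, t5, t6, t7, t8, t9, t10⟩ := ht
  have hl' : ¬ NL G S v' := fun hl' => c.b4 t2 t1 (by grind [Nb]) hl'
  have hne : w ≠ v' := by rintro rfl; exact hl' hl
  have hsep := c.sep hw hl t2 hne
  have hnd : ∀ q y, ¬ Diam G S q w y := fun q y hD => c.dm1c hD t1 t4 t8.1 t7 t8 t9 a1
  obtain ⟨nz, x, x1, x2, x3, x5, x4⟩ := c.exc t7 (v := v) (r := g)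
    (Or.inr ⟨t1, t4, t6, by grind [Nb], by grind [Nb]⟩) t8 t9 hw hl t2 hl' a1 a2 hnd hq
  obtain ⟨q1, q2, hn, hp1, hp2⟩ := c.leaf_priv hy hqS hyq
  have hs0 := c.leaf_s0 hy hqS hyq
  obtain ⟨r, hr, hrS⟩ := c.leaf_nb' hy hqS hyq
  refine ⟨q1, q2, hn, hp1, ?_⟩
  by_contra hcon
  have : ∃ s, G.Adj q2 s ∧ s ∈ S ∧ s ≠ q := by
    by_contra hc
    push Not at hc
    exact hcon ⟨hqS, hp2, by grind [Nb], hc⟩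
  obtain ⟨s, hs⟩ := this
  have hqa : ¬ G.Adj a q := by
    intro hqa
    obtain ⟨g1, g2, e1, e2, e3⟩ := c.b7 t1 t4 hqS hqa
    unfold Nb Priv Leaf InU at *
    grind
  have hyn := c.nb3 t8.2.2.1 a1 hy.2.2.1.symm (by grind [Priv, InU]) (by grind [Priv, Leaf])
    (by grind [InU, Leaf])
  have hzn := c.nb3 t9.2.2.1 a2 x2.symm (by grind [Priv, InU]) (by grind [Priv])
    (by rintro rfl; exact c.b4 hw t2 x1.symm hl)
  obtain ⟨u3, u4, hu'⟩ := c.nb1 a2.symm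
  obtain ⟨u1, u2, hu⟩ := c.nb1 a1.symm
  have hs7 := c.leaf_s0 t4 t8.1 (by grind [Nb])
  clear hl' hq hcon hnd nz
  unfold Nb Priv InU NL Leaf at *
  refine c.flip3 [h2, y] [h, q] [v'] [q1] [] [(y, r)] (by simp) (by simp) (by simp) ?_ ?_ ?_ ?_ ?_ ?_ ?_ ?_ ?_ ?_ ?_ ?_ <;>
    simp only [List.mem_cons, List.not_mem_nil, or_false, forall_eq_or_imp, forall_eq, List.nodup_cons,
      List.nodup_nil, not_or, false_or, not_false_eq_true, and_true, true_and] <;>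
    (repeat' apply And.intro) <;> grind (splits := 20)

set_option maxHeartbeats 1000000 in
theorem Ctx.t2f (c : Ctx G S) {v a v' b3 g h h1 h2 w1 : V} (ht : T2 G S v a v' b3 g h h1 h2)
    (hx : Ex G S v b3 h1) (hw1 : InU G S w1) (a1 : G.Adj h1 w1) (hwv : w1 ≠ v) (hwv' : w1 ≠ v')
    (a2 : G.Adj h2 v') (hq : Quiet G S h2) : False := by
  have hS := c.si
  obtain ⟨t1, t2, t3, t4, t5, t6, t7, t8, t9, t10⟩ := ht
  have hs1 : ∀ t, G.Adj t w1 → G.Adj t v → False := fun t a b => hwv (c.uniqU hw1 t1 a b)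
  have hs2 : ∀ t, G.Adj t w1 → G.Adj t v' → False := fun t a b => hwv' (c.uniqU hw1 t2 a b)
  obtain ⟨u3, u4, hu'⟩ := c.nb1 a2.symm
  obtain ⟨u1, u2, hu⟩ := c.nb1 a1.symm
  unfold Ex at hx
  have hb3 : b3 ≠ w1 := by
    rintro rfl
    exact hwv' (c.b6 t1 hw1 t2 (by grind [Nb]) (by grind [Nb]))
  have hbn := c.nb3 t8.2.2.1 a1 hx.2.1.symm (by grind [Priv, InU]) (by grind [Priv, Nb, InU])
    hb3.symm
  rcases quiet_cases t9.2.1 hq with n | ⟨y, q, w', hy, hD⟩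
  · obtain ⟨z3, hzn⟩ := c.nb2 t9.2.2.1 a2 (by grind [Priv, InU])
    clear hq
    unfold Nb Priv InU NL Leaf at *
    refine c.flip1 [h1, h2] [h] [w1, v'] [] (by simp) ?_ ?_ ?_ ?_ ?_ ?_ ?_ ?_ ?_ <;>
      simp only [List.mem_cons, List.not_mem_nil, or_false, forall_eq_or_imp, forall_eq, List.nodup_cons,
        List.nodup_nil, not_or, false_or, not_false_eq_true, and_true, true_and] <;>
      (repeat' apply And.intro) <;> grind (splits := 40) (ematch := 12) (instances := 6000)
  · have ⟨hwU', hwl'⟩ := hD.top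
    have hne : w' ≠ w1 := by
      rintro rfl
      exact c.dm1c hD t1 t4 t8.1 t7 t8 t9 a1
    have hne2 : w' ≠ v' := by
      rintro rfl
      exact c.b4 t2 t1 (by grind [Nb]) hwl'
    have hne1 : w' ≠ v := by rintro rfl; exact hwl'.not_leaf t4
    have hsep := c.sep hwU' hwl' hw1 hne
    have hsep1 := c.sep hwU' hwl' t1 hne1
    have hsep2 := c.sep hwU' hwl' t2 hne2
    have hzn := c.nb3 t9.2.2.1 a2 hy.2.2.1.symm (by grind [Priv, InU]) (by grind [Priv, Leaf])
      (by grind [InU, Diam, Nb, Priv])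
    obtain ⟨r', q1', q2', t1, t2, e, ke, e3, hd⟩ := c.dead hy hD
    clear hD hq hwl'
    unfold DP Nb Priv InU NL Leaf at *
    refine c.flip1 [h1, h2, y, w'] [h, q] [w1, v', w'] [] (by simp) ?_ ?_ ?_ ?_ ?_ ?_ ?_ ?_ ?_ <;>
      simp only [List.mem_cons, List.not_mem_nil, or_false, forall_eq_or_imp, forall_eq, List.nodup_cons,
        List.nodup_nil, not_or, false_or, not_false_eq_true, and_true, true_and] <;>
      (repeat' apply And.intro) <;> grind (splits := 40) (ematch := 12) (instances := 6000)

end RD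
end PartI

section PartJ
open Classical
set_option linter.unusedSectionVars false
namespace RD
variable {V : Type} [Fintype V] {G : SimpleGraph V} {S : Finset V}

/-! ### Weights -/

/-- number of private neighbours -/
noncomputable def pn (G : SimpleGraph V) (S : Finset V) (u : V) : ℤ :=
  ∑ b, if Priv G S u b then 1 else 0

/-- number of neighbours in `S` -/
noncomputable def ds (G : SimpleGraph V) (S : Finset V) (u : V) : ℤ :=
  ∑ t, if G.Adj u t ∧ t ∈ S then 1 else 0

def OneLeaf (G : SimpleGraph V) (S : Finset V) (v : V) : Prop :=
  ∃ a, Leaf G S a v ∧ ∀ a', Leaf G S a' v → a' = a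

/-- the demand of an undominated vertex -/
noncomputable def dem (G : SimpleGraph V) (S : Finset V) (v : V) : ℤ :=
  if NL G S v then 4 else if OneLeaf G S v then 2 else 0

noncomputable def dd (G : SimpleGraph V) (S : Finset V) (b : V) : ℤ :=
  ∑ v, if InU G S v ∧ G.Adj b v then dem G S v else 0

/-- live leaves -/
def Live (G : SimpleGraph V) (S : Finset V) (y b : V) : Prop :=
  Leaf G S y b ∧ (∃ k, Priv G S k b) ∧ ¬ ∃ q w, Diam G S q w y

noncomputable def rho (G : SimpleGraph V) (S : Finset V) (y : V) : ℤ :=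
  ∑ q, if q ∈ S ∧ G.Adj y q then pn G S q else 0

noncomputable def rr (G : SimpleGraph V) (S : Finset V) (b : V) : ℤ :=
  ∑ y, if Live G S y b then rho G S y else 0

noncomputable def spv (G : SimpleGraph V) (S : Finset V) (x : V) : ℤ :=
  if ∃ k, Sp G S k x then 2 else 0

noncomputable def val (G : SimpleGraph V) (S : Finset V) (b : V) : ℤ :=
  dd G S b - rr G S b + spv G S b

noncomputable def give (G : SimpleGraph V) (S : Finset V) (u : V) : ℤ :=
  ∑ y, if G.Adj u y ∧ ∃ b, Live G S y b then pn G S u else 0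

noncomputable def recv (G : SimpleGraph V) (S : Finset V) (k : V) : ℤ :=
  ∑ x, if Sp G S k x then 2 else 0

noncomputable def XX (G : SimpleGraph V) (S : Finset V) (u : V) : ℤ :=
  (∑ b, if Priv G S u b then val G S b else 0) + give G S u - recv G S u

/-- all neighbours in `S` -/
def Cen (G : SimpleGraph V) (S : Finset V) (t : V) : Prop := t ∈ S ∧ ∀ u, G.Adj t u → u ∈ S

noncomputable def flow (G : SimpleGraph V) (S : Finset V) (u : V) : ℤ :=
  (∑ t, if G.Adj u t ∧ Cen G S t then 4 else 0) - if Cen G S u then 12 else 0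

noncomputable def slack (G : SimpleGraph V) (S : Finset V) (u : V) : ℤ :=
  4 * (pn G S u - ds G S u) - XX G S u - flow G S u

/-- sums over the neighbourhood -/
theorem Nb.sum {u x y z : V} (h : Nb G u x y z) (f : V → ℤ) (hf : ∀ t, ¬ G.Adj u t → f t = 0) :
    ∑ t, f t = f x + f y + f z := by
  obtain ⟨h1, h2, h3, -, -, -, -, -, -, h4⟩ := h
  have : ∑ t, f t = ∑ t ∈ {x, y, z}, f t := by
    symm
    apply Finset.sum_subset (Finset.subset_univ _)
    intro t _ ht
    apply hf
    intro hh
    apply ht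
    simpa using h4 t hh
  rw [this, Finset.sum_insert (by simp [h1, h2]), Finset.sum_insert (by simp [h3]),
    Finset.sum_singleton, add_assoc]

theorem Nb.pn {u x y z : V} (h : Nb G u x y z) : pn G S u =
    (if Priv G S u x then 1 else 0) + (if Priv G S u y then 1 else 0) +
    (if Priv G S u z then 1 else 0) := by
  refine h.sum (fun b => if Priv G S u b then 1 else 0) fun t ht => ?_
  exact if_neg fun hh => ht hh.2.2.1.symm

theorem Nb.ds {u x y z : V} (h : Nb G u x y z) : ds G S u =
    (if x ∈ S then 1 else 0) + (if y ∈ S then 1 else 0) + (if z ∈ S then 1 else 0) := by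
  have := h.sum (fun t => if G.Adj u t ∧ t ∈ S then (1 : ℤ) else 0) fun t ht =>
    if_neg fun hh => ht hh.1
  unfold Nb at h
  simpa [RD.ds, h] using this

theorem Nb.give {u x y z : V} (h : Nb G u x y z) : give G S u =
    (if ∃ b, Live G S x b then RD.pn G S u else 0) + (if ∃ b, Live G S y b then RD.pn G S u else 0) +
    (if ∃ b, Live G S z b then RD.pn G S u else 0) := by
  have := h.sum (fun t => if G.Adj u t ∧ ∃ b, Live G S t b then RD.pn G S u else 0) fun t ht =>
    if_neg fun hh => ht hh.1
  unfold Nb at h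
  simpa [RD.give, h] using this

theorem Nb.val {u x y z : V} (h : Nb G u x y z) :
    (∑ b, if Priv G S u b then val G S b else 0) =
    (if Priv G S u x then RD.val G S x else 0) + (if Priv G S u y then RD.val G S y else 0) +
    (if Priv G S u z then RD.val G S z else 0) := by
  refine h.sum (fun b => if Priv G S u b then RD.val G S b else 0) fun t ht => ?_
  exact if_neg fun hh => ht hh.2.2.1.symm

theorem Nb.rho {u x y z : V} (h : Nb G u x y z) : rho G S u =
    (if x ∈ S then RD.pn G S x else 0) + (if y ∈ S then RD.pn G S y else 0) +
    (if z ∈ S then RD.pn G S z else 0) := by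
  have := h.sum (fun q => if q ∈ S ∧ G.Adj u q then RD.pn G S q else 0) fun t ht =>
    if_neg fun hh => ht hh.2
  unfold Nb at h
  simpa [RD.rho, h] using this

theorem Nb.cen {u x y z : V} (h : Nb G u x y z) :
    (∑ t, if G.Adj u t ∧ Cen G S t then (4 : ℤ) else 0) =
    (if Cen G S x then 4 else 0) + (if Cen G S y then 4 else 0) +
    (if Cen G S z then 4 else 0) := by
  have := h.sum (fun t => if G.Adj u t ∧ Cen G S t then (4 : ℤ) else 0) fun t ht =>
    if_neg fun hh => ht hh.1
  unfold Nb at h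
  simpa [h] using this

theorem pn_nonneg (u : V) : 0 ≤ pn G S u :=
  Finset.sum_nonneg fun _ _ => by split_ifs <;> norm_num

theorem rho_nonneg (u : V) : 0 ≤ rho G S u :=
  Finset.sum_nonneg fun _ _ => by split_ifs <;> simp [pn_nonneg]

theorem rr_nonneg (u : V) : 0 ≤ rr G S u :=
  Finset.sum_nonneg fun _ _ => by split_ifs <;> simp [rho_nonneg]

theorem recv_nonneg (u : V) : 0 ≤ recv G S u :=
  Finset.sum_nonneg fun _ _ => by split_ifs <;> norm_num

theorem recv_ge {k x : V} (h : Sp G S k x) : 2 ≤ recv G S k := by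
  have := Finset.single_le_sum (f := fun x => if Sp G S k x then (2 : ℤ) else 0)
    (fun _ _ => by positivity) (Finset.mem_univ x)
  simpa [recv, h] using this

theorem rr_ge {y b : V} (h : Live G S y b) : rho G S y ≤ rr G S b := by
  have := Finset.single_le_sum (f := fun y => if Live G S y b then rho G S y else 0)
    (fun _ _ => by split_ifs <;> simp [rho_nonneg]) (Finset.mem_univ y)
  simpa [rr, h] using this

theorem dem_nonneg (v : V) : 0 ≤ dem G S v := by
  unfold dem; split_ifs <;> norm_num

theorem Ctx.dd_eq (c : Ctx G S) {b v : V} (hv : InU G S v) (h : G.Adj b v) :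
    dd G S b = dem G S v := by
  unfold dd
  rw [Finset.sum_eq_single v]
  · simp [hv, h]
  · intro w _ hne
    exact if_neg fun hh => hne (c.uniqU hh.1 hv hh.2 h)
  · simp

theorem Ctx.dd_cases (c : Ctx G S) (b : V) : dd G S b = 0 ∨
    (dd G S b = 2 ∧ ∃ v, InU G S v ∧ ¬ NL G S v ∧ G.Adj b v) ∨
    (dd G S b = 4 ∧ ∃ w, InU G S w ∧ NL G S w ∧ G.Adj b w) := by
  by_cases h : ∃ v, InU G S v ∧ G.Adj b v
  · obtain ⟨v, h1, h2⟩ := h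
    rw [c.dd_eq h1 h2]
    unfold dem
    split_ifs with h3 h4
    · exact Or.inr (Or.inr ⟨rfl, v, h1, h3, h2⟩)
    · exact Or.inr (Or.inl ⟨rfl, v, h1, h3, h2⟩)
    · exact Or.inl rfl
  · left
    apply Finset.sum_eq_zero
    intro v _
    exact if_neg fun hh => h ⟨v, hh⟩

theorem Ctx.pn_two {q y q1 q2 : V} (_c : Ctx G S) (h : Nb G q y q1 q2) (h1 : Priv G S q q1)
    (h2 : Priv G S q q2) : 2 ≤ RD.pn G S q := by
  rw [h.pn]
  simp only [h1, h2, if_true]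
  split_ifs <;> norm_num

theorem Ctx.leaf_pn (c : Ctx G S) {y b q : V} (h : Leaf G S y b) (hq : q ∈ S) (hyq : G.Adj y q) :
    1 ≤ RD.pn G S q := by
  obtain ⟨q1, q2, h1, h2, h3⟩ := c.leaf_priv h hq hyq
  rw [h1.pn]
  simp only [h2, if_true]
  split_ifs <;> norm_num

theorem not_quiet {k b : V} (hk : Priv G S k b) (h : ¬ Quiet G S b) : ∃ y, Live G S y b := by
  unfold Quiet at h
  push Not at h
  obtain ⟨y, h1, h2⟩ := h
  exact ⟨y, h1, ⟨k, hk⟩, by push Not; exact h2⟩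

/-- a vertex with a live leaf receives at least two -/
theorem Ctx.rr2 (c : Ctx G S) {k b : V} (hk : Priv G S k b) (h : ¬ Quiet G S b) :
    2 ≤ RD.rr G S b := by
  obtain ⟨y, hy⟩ := not_quiet hk h
  refine le_trans ?_ (rr_ge hy)
  obtain ⟨q, r, hn, h1, h2⟩ := c.leaf_nb hy.1
  have e1 := c.leaf_pn hy.1 h1 (by grind [Nb])
  have e2 := c.leaf_pn hy.1 h2 (by grind [Nb])
  rw [hn.rho]
  simp only [h1, h2, hy.1.2.1, if_true, if_false]
  linarith

theorem Ctx.rr4 (c : Ctx G S) {k b : V} (hk : Priv G S k b) (h : ¬ Quiet G S b)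
    (hp : ∀ y q, Leaf G S y b → q ∈ S → G.Adj y q →
      ∃ q1 q2, Nb G q y q1 q2 ∧ Priv G S q q1 ∧ Priv G S q q2) :
    4 ≤ RD.rr G S b := by
  obtain ⟨y, hy⟩ := not_quiet hk h
  refine le_trans ?_ (rr_ge hy)
  obtain ⟨q, r, hn, h1, h2⟩ := c.leaf_nb hy.1
  obtain ⟨_, _, e1, e2, e3⟩ := hp y q hy.1 h1 (by grind [Nb])
  obtain ⟨_, _, f1, f2, f3⟩ := hp y r hy.1 h2 (by grind [Nb])
  have g1 := c.pn_two e1 e2 e3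
  have g2 := c.pn_two f1 f2 f3
  rw [hn.rho]
  simp only [h1, h2, hy.1.2.1, if_true, if_false]
  linarith

/-- a private neighbour is not a leaf -/
theorem Ctx.priv_not_leaf (c : Ctx G S) {k b v : V} (h : Priv G S k b) : ¬ Leaf G S b v := by
  intro hl
  obtain ⟨q, r, hn, h1, h2⟩ := c.leaf_nb hl
  unfold Nb Priv Leaf at *
  grind

theorem Ctx.priv_not_live (c : Ctx G S) {k b : V} (h : Priv G S k b) : ¬ ∃ v, Live G S b v :=
  fun ⟨_, hv⟩ => c.priv_not_leaf h hv.1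

theorem sp_dd {k x : V} (h : Sp G S k x) :
    ∃ w, InU G S w ∧ NL G S w ∧ G.Adj x w := by
  obtain ⟨m, b, z, w, v2, kx, h1, h2, h3, h4, h5, h6, h7, h8, h9, h10, h11, h12⟩ := h
  exact ⟨w, h5, h6, by grind [Nb]⟩

end RD
end PartJ

section PartK
open Classical
set_option linter.unusedSectionVars false
namespace RD
variable {V : Type} [Fintype V] {G : SimpleGraph V} {S : Finset V}

/-! ### Local bounds -/

theorem spv_cases (b : V) : (spv G S b = 2 ∧ ∃ k, Sp G S k b) ∨
    (spv G S b = 0 ∧ ¬ ∃ k, Sp G S k b) := by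
  unfold spv; split_ifs with h <;> simp [h]

theorem spv_zero {b : V} (h : ¬ ∃ k, Sp G S k b) : spv G S b = 0 := if_neg h

/-- vertices all of whose neighbours are in `S` -/
theorem Ctx.slack_cen (c : Ctx G S) {u : V} (hu : Cen G S u) : 0 ≤ RD.slack G S u := by
  obtain ⟨x, y, z, h1, h2, h3, h4⟩ := c.cubic u
  have hn : Nb G u x y z := c.nb3 ((h4 x).2 (by simp)) ((h4 y).2 (by simp)) ((h4 z).2 (by simp))
    h1 h2 h3
  have ax : G.Adj u x := hn.2.2.2.1
  have ay : G.Adj u y := hn.2.2.2.2.1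
  have az : G.Adj u z := hn.2.2.2.2.2.1
  have np : ∀ t, G.Adj u t → ¬ Priv G S u t := fun t ht hp => hp.2.1 (hu.2 t ht)
  have nl : ∀ t, G.Adj u t → ¬ ∃ b, Live G S t b := fun t ht ⟨b, hp⟩ => hp.1.1 (hu.2 t ht)
  have nc : ∀ t, G.Adj u t → ¬ Cen G S t := fun t ht hp =>
    c.b3 hu.1 hp.1 ht hu.2 hp.2
  unfold slack XX flow
  rw [hn.pn, hn.ds, hn.val, hn.give, hn.cen]
  simp only [np x ax, np y ay, np z az, nl x ax, nl y ay, nl z az, nc x ax, nc y ay, nc z az, hu,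
    hu.2 x ax, hu.2 y ay, hu.2 z az, if_true, if_false]
  linarith [recv_nonneg (G := G) (S := S) u]

/-- owners of special vertices -/
theorem Ctx.sp_owner (c : Ctx G S) {k x u : V} (h : Sp G S k x) (hu : Priv G S u x) :
    (∃ b z w v2, SpD G S k x u b z w v2 u) ∨
    ∃ m b z w v2 x1 x2, SpD G S k x m b z w v2 u ∧ Nb G u x x1 x2 ∧ Priv G S u x1 ∧
      Priv G S u x2 := by
  obtain ⟨m, b, z, w, v2, kx, hd⟩ := h
  have e : kx = u := by
    have := hd.2.2.2.2.2.2.2.2.2.2.2.1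
    exact hu.2.2.2 _ this.2.2.1 this.1
  subst e
  rcases c.sp_own hd with e | ⟨x1, x2, h1, h2, h3⟩
  · subst e
    exact Or.inl ⟨b, z, w, v2, hd⟩
  · exact Or.inr ⟨m, b, z, w, v2, x1, x2, hd, h1, h2, h3⟩

theorem Ctx.leg_val (c : Ctx G S) {u m b z : V} (hn : Nb G u m b z) (hm : Cen G S m)
    (hb : Priv G S u b) (hz : Priv G S u z) : RD.val G S b ≤ 0 := by
  have hs : ¬ ∃ k, Sp G S k b := by
    rintro ⟨k, hk⟩
    rcases c.sp_owner hk hb with ⟨b', z', w, v2, h⟩ | ⟨m', b', z', w, v2, x1, x2, h, h1, h2, h3⟩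
    · have : k = m := by
        have h2 := h.2.1
        have h3 := h.2.2.1.1
        unfold Nb Priv at *
        grind
      subst this
      have h2 := h.2.1
      have := hm.2 b' (by grind [Nb])
      exact h.2.2.1.2.1 this
    · have := hm.1
      unfold Nb Priv at *
      grind
  unfold val
  rw [spv_zero hs]
  have h0 := rr_nonneg (G := G) (S := S) b
  rcases c.dd_cases b with h | ⟨h, v, h1, h2, h3⟩ | ⟨h, w, h1, h2, h3⟩
  · linarith
  · by_cases hq : Quiet G S b
    · exfalso
      rcases quiet_cases hb.2.1 hq with n | ⟨y, q, w, hy, hD⟩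
      · exact c.f2 hn hm.1 hm.2 hb hz h1 h3 n
      · exact c.f2d hn hm.1 hm.2 hb hz h1 h3 hy hD
    · linarith [c.rr2 hb hq]
  · exact (c.f1 hn hm.1 hm.2 hb hz h1 h3 h2).elim

/-- a pair vertex owning a special vertex -/
theorem Ctx.pair_val1 (c : Ctx G S) {u m b z : V} (hn : Nb G u m b z) (hm : m ∈ S)
    (hb : Priv G S u b) (hz : Priv G S u z) (hs : ∃ k, Sp G S k b) :
    RD.val G S b + RD.val G S z ≤ 4 := by
  obtain ⟨k, hk⟩ := hs
  obtain ⟨w, w1, w2, w3⟩ := sp_dd hk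
  rcases c.sp_owner hk hb with ⟨b', z', w', v2, h⟩ | ⟨m', b', z', w', v2, x1, x2, h, h1, h2, h3⟩
  · have : k = m := by
      have h2 := h.2.1
      have h3 := h.2.2.1.1
      unfold Nb Priv at *
      grind
    subst this
    have hq : ¬ Quiet G S z := fun hq => c.sp_m1 h hn hz hq
    have hz2 := c.rr2 hz hq
    have hl : ¬ ∃ w, InU G S w ∧ NL G S w ∧ G.Adj z w := by
      rintro ⟨w', i1, i2, i3⟩
      exact c.p1 hm hn hb hz w1 i1 w3 i3 w2 i2
    have hs : ¬ ∃ k, Sp G S k z := fun ⟨k, hk⟩ => hl (sp_dd hk)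
    unfold val
    rw [spv_zero hs]
    have h0 := rr_nonneg (G := G) (S := S) b
    have e1 : RD.dd G S b = 4 := by
      rw [c.dd_eq w1 w3]
      exact if_pos w2
    have e2 : spv G S b = 2 := if_pos ⟨k, hk⟩
    rcases c.dd_cases z with e3 | ⟨e3, v, i1, i2, i3⟩ | ⟨e3, i⟩
    · linarith
    · have := c.rr4 hz hq fun y q a1 a2 a3 => c.sp_m2 h hn hz i1 i3 a1 a2 a3
      linarith
    · exact (hl i).elim
  · exfalso
    unfold Nb Priv at *
    grind

theorem Ctx.pair_val (c : Ctx G S) {u m b z : V} (hn : Nb G u m b z) (hm : m ∈ S)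
    (hb : Priv G S u b) (hz : Priv G S u z) :
    RD.val G S b + RD.val G S z - RD.recv G S u ≤ 4 := by
  have h0 := recv_nonneg (G := G) (S := S) u
  rcases spv_cases (G := G) (S := S) b with ⟨-, hs⟩ | ⟨hs, -⟩
  · linarith [c.pair_val1 hn hm hb hz hs]
  rcases spv_cases (G := G) (S := S) z with ⟨-, hs'⟩ | ⟨hs', -⟩
  · linarith [c.pair_val1 hn.swap hm hz hb hs']
  unfold val
  have h1 := rr_nonneg (G := G) (S := S) b
  have h2 := rr_nonneg (G := G) (S := S) z
  have key : ∀ {b z : V}, Nb G u m b z → Priv G S u b → Priv G S u z →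
      (∃ w, InU G S w ∧ NL G S w ∧ G.Adj b w) → (∃ v, InU G S v ∧ ¬ NL G S v ∧ G.Adj z v) →
      0 ≤ RD.rr G S b → 0 ≤ RD.rr G S z → 2 ≤ RD.rr G S b + RD.rr G S z + RD.recv G S u := by
    intro b z hn hb hz ⟨w, i1, i2, i3⟩ ⟨v, j1, j2, j3⟩ h1 h2
    by_cases q1 : Quiet G S b
    · by_cases q2 : Quiet G S z
      · obtain ⟨x, hx⟩ := c.pair_sp hn hm hb hz i1 i2 j1 j2 i3 j3 q1 q2
        linarith [recv_ge hx]
      · linarith [c.rr2 hz q2]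
    · linarith [c.rr2 hb q1]
  rcases c.dd_cases b with e | ⟨e, i⟩ | ⟨e, i⟩ <;> rcases c.dd_cases z with e' | ⟨e', j⟩ | ⟨e', j⟩
  · linarith
  · linarith
  · linarith
  · linarith
  · linarith
  · linarith [key hn.swap hz hb j i h2 h1]
  · linarith
  · linarith [key hn hb hz i j h1 h2]
  · obtain ⟨w, i1, i2, i3⟩ := i
    obtain ⟨w', j1, j2, j3⟩ := j
    exact (c.p1 hm hn hb hz i1 j1 i3 j3 i2 j2).elim

theorem Ctx.slack_one (c : Ctx G S) {u m x : V} (hu : u ∈ S) (hm : m ∈ S) (hx : x ∉ S)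
    (hum : G.Adj u m) (hux : G.Adj u x) : 0 ≤ RD.slack G S u := by
  obtain ⟨b, z, hn, hb, hz⟩ := c.b1 hu hm hx hum hux
  have np : ¬ Priv G S u m := fun hp => hp.2.1 hm
  have nl : ¬ ∃ b, Live G S m b := fun ⟨b, hp⟩ => hp.1.1 hm
  have nc : ∀ t, t ∉ S → ¬ Cen G S t := fun t ht hp => ht hp.1
  have nu : ¬ Cen G S u := fun hp => hx (hp.2 x hux)
  have h1 := c.priv_not_live hb
  have h2 := c.priv_not_live hz
  unfold slack XX flow
  rw [hn.pn, hn.ds, hn.val, hn.give, hn.cen]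
  simp only [np, nl, nu, nc b hb.2.1, nc z hz.2.1, hb, hz, h1, h2, hm, hb.2.1, hz.2.1, if_true,
    if_false]
  split_ifs with hc
  · linarith [c.leg_val hn hc hb hz, c.leg_val hn.swap hc hz hb,
      recv_nonneg (G := G) (S := S) u]
  · linarith [c.pair_val hn hm hb hz]

/-- vertices without `S`-neighbours -/
theorem Ctx.slack_zero_eq (c : Ctx G S) {u x y z : V} (hu : u ∈ S)
    (h0 : ∀ t, G.Adj u t → t ∉ S) (hn : Nb G u x y z) :
    RD.slack G S u = 4 * RD.pn G S u - XX G S u := by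
  have ax : G.Adj u x := hn.2.2.2.1
  have ay : G.Adj u y := hn.2.2.2.2.1
  have az : G.Adj u z := hn.2.2.2.2.2.1
  have nc : ∀ t, G.Adj u t → ¬ Cen G S t := fun t ht hp => h0 t ht hp.1
  have nu : ¬ Cen G S u := fun hp => h0 x ax (hp.2 x ax)
  unfold slack flow
  rw [hn.ds, hn.cen]
  simp only [nc x ax, nc y ay, nc z az, nu, h0 x ax, h0 y ay, h0 z az, if_false]
  ring

theorem Ctx.no_sp (c : Ctx G S) {u x n : V} (h0 : ∀ t, G.Adj u t → t ∉ S)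
    (hn : G.Adj u n) (hp : ¬ Priv G S u n) (hx : Priv G S u x) : ¬ ∃ k, Sp G S k x := by
  rintro ⟨k, hk⟩
  rcases c.sp_owner hk hx with ⟨b', z', w, v2, h⟩ | ⟨m', b', z', w, v2, x1, x2, h, h1, h2, h3⟩
  · have h2 := h.2.1
    exact h0 k (by grind [Nb]) h.2.2.1.1
  · have := h1.2.2.2.2.2.2.2.2.2 n hn
    rcases this with rfl | rfl | rfl <;> exact hp (by assumption)

theorem Ctx.slack_p1 (c : Ctx G S) {u b x x' : V} (hu : u ∈ S) (h0 : ∀ t, G.Adj u t → t ∉ S)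
    (hn : Nb G u b x x') (hb : Priv G S u b) (hx : ¬ Priv G S u x) (hx' : ¬ Priv G S u x') :
    0 ≤ RD.slack G S u := by
  have ex : ∀ t, G.Adj u t → ¬ Priv G S u t → ∃ s, t ∉ S ∧ G.Adj t s ∧ s ∈ S ∧ s ≠ u := by
    intro t ht hp
    by_contra hc
    push Not at hc
    exact hp ⟨hu, h0 t ht, ht.symm, fun s a1 a2 => hc s (h0 t ht) a1 a2⟩
  have ax : G.Adj u x := hn.2.2.2.2.1
  have ax' : G.Adj u x' := hn.2.2.2.2.2.1
  have hs := c.no_sp h0 ax hx hb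
  have hl := c.priv_not_live hb
  have hp : RD.pn G S u = 1 := by
    rw [hn.pn]
    simp [hb, hx, hx']
  have h1 := rr_nonneg (G := G) (S := S) b
  have key : RD.val G S b ≤ 2 := by
    unfold val
    rw [spv_zero hs]
    rcases c.dd_cases b with h | ⟨h, i⟩ | ⟨h, w, i1, i2, i3⟩
    · linarith
    · linarith
    · by_cases hq : Quiet G S b
      · obtain ⟨s, e1⟩ := ex x ax hx
        obtain ⟨s', e2⟩ := ex x' ax' hx'
        exact (c.s0p1 hn hb e1 e2 i1 i2 i3 hq).elim
      · linarith [c.rr2 hb hq]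
  rw [c.slack_zero_eq hu h0 hn, XX, hn.val, hn.give, hp]
  simp only [hb, hx, hx', hl, if_true, if_false]
  have := recv_nonneg (G := G) (S := S) u
  split_ifs <;> linarith

theorem Ctx.slack_p2 (c : Ctx G S) {u x b z : V} (hu : u ∈ S) (h0 : ∀ t, G.Adj u t → t ∉ S)
    (hn : Nb G u x b z) (hb : Priv G S u b) (hz : Priv G S u z) (hx : ¬ Priv G S u x) :
    0 ≤ RD.slack G S u := by
  have ax : G.Adj u x := hn.2.2.2.1
  have ex : ∃ s, x ∉ S ∧ G.Adj x s ∧ s ∈ S ∧ s ≠ u := by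
    by_contra hc
    push Not at hc
    exact hx ⟨hu, h0 x ax, ax.symm, fun s a1 a2 => hc s (h0 x ax) a1 a2⟩
  obtain ⟨s, hs⟩ := ex
  have hsb := c.no_sp h0 ax hx hb
  have hsz := c.no_sp h0 ax hx hz
  have hlb := c.priv_not_live hb
  have hlz := c.priv_not_live hz
  have hp : RD.pn G S u = 2 := by
    rw [hn.pn]
    simp [hb, hx, hz]
  have h1 := rr_nonneg (G := G) (S := S) b
  have h2 := rr_nonneg (G := G) (S := S) z
  have h3 := recv_nonneg (G := G) (S := S) u
  rw [c.slack_zero_eq hu h0 hn, XX, hn.val, hn.give, hp]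
  simp only [hb, hx, hz, hlb, hlz, if_true, if_false]
  unfold val
  rw [spv_zero hsb, spv_zero hsz]
  rcases c.dd_cases b with e | ⟨e, i⟩ | ⟨e, w, i1, i2, i3⟩ <;>
    rcases c.dd_cases z with e' | ⟨e', j⟩ | ⟨e', w', j1, j2, j3⟩
  all_goals try (split_ifs <;> linarith)
  by_cases hw : w = w'
  · subst hw
    have : ¬ ∃ b, Live G S x b := by
      rintro ⟨b', hb'⟩
      exact hb'.2.2 ⟨u, w, b, z, hn, hb, hz, hs.1, hx, i3, j3, i1, i2⟩
    simp only [this, if_false]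
    linarith
  · by_cases q1 : Quiet G S b
    · by_cases q2 : Quiet G S z
      · exact (c.s0p2 hn hs hb hz i1 j1 i2 j2 i3 j3 hw q1 q2).elim
      · have := c.rr2 hz q2
        split_ifs <;> linarith
    · have := c.rr2 hb q1
      split_ifs <;> linarith

theorem Ctx.val_le (c : Ctx G S) (b : V) : RD.val G S b ≤ 6 ∧
    ((¬ ∃ k, Sp G S k b) → RD.val G S b ≤ 4) ∧
    ((¬ ∃ w, InU G S w ∧ NL G S w ∧ G.Adj b w) → RD.val G S b ≤ 2) := by
  have h1 := rr_nonneg (G := G) (S := S) b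
  unfold val
  rcases spv_cases (G := G) (S := S) b with ⟨hs, k, hk⟩ | ⟨hs, hk⟩ <;>
  rcases c.dd_cases b with e | ⟨e, i⟩ | ⟨e, i⟩
  all_goals refine ⟨by linarith, fun hh => ?_, fun hh => ?_⟩
  all_goals first | linarith | exact (hh i).elim | exact (hh ⟨_, hk⟩).elim | exact (hh (sp_dd hk)).elim

theorem Ctx.val3 (c : Ctx G S) {u x y z k : V} (hn : Nb G u x y z) (hx : Priv G S u x)
    (hy : Priv G S u y) (hz : Priv G S u z) (hs : Sp G S k x)
    (hl : ¬ ∃ w, InU G S w ∧ NL G S w ∧ G.Adj z w) :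
    RD.val G S x + RD.val G S y + RD.val G S z ≤ 12 := by
  have h1 := c.val_le x
  have h2 := c.val_le y
  have h3 := (c.val_le z).2.2 hl
  by_cases hsy : ∃ k', Sp G S k' y
  · obtain ⟨k', hk'⟩ := hsy
    have hsz : ¬ ∃ k, Sp G S k z := fun ⟨k, hk⟩ => hl (sp_dd hk)
    have h4 := rr_nonneg (G := G) (S := S) z
    have key : RD.val G S z ≤ 0 := by
      unfold val
      rw [spv_zero hsz]
      rcases c.dd_cases z with e | ⟨e, v, i1, i2, i3⟩ | ⟨e, i⟩
      · linarith
      · by_cases hq : Quiet G S z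
        · exfalso
          have own : ∀ {k x : V}, Sp G S k x → Priv G S u x → ∃ m b z w v2, SpD G S k x m b z w v2 u := by
            intro k x h hp
            rcases c.sp_owner h hp with ⟨b, z, w, v2, h⟩ | ⟨m, b, z, w, v2, x1, x2, h, -⟩
            · exact ⟨_, _, _, _, _, h⟩
            · exact ⟨_, _, _, _, _, h⟩
          obtain ⟨m, b, z', w, v2, g1⟩ := own hs hx
          obtain ⟨m', b', z'', w', v2', g2⟩ := own hk' hy
          exact c.p3c g1 g2 hn hz i1 i2 i3 hq
        · linarith [c.rr2 hz hq]
      · exact (hl i).elim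
    linarith
  · linarith [h2.2.1 hsy]

theorem Ctx.val3' (c : Ctx G S) {u x y z k : V} (hn : Nb G u x y z) (hx : Priv G S u x)
    (hy : Priv G S u y) (hz : Priv G S u z) (hs : Sp G S k x) :
    RD.val G S x + RD.val G S y + RD.val G S z ≤ 12 := by
  by_cases hl : ∃ w, InU G S w ∧ NL G S w ∧ G.Adj z w
  · by_cases hl' : ∃ w, InU G S w ∧ NL G S w ∧ G.Adj y w
    · exfalso
      obtain ⟨w, i1, i2, i3⟩ := hl'
      obtain ⟨w', j1, j2, j3⟩ := hl
      rcases c.sp_owner hs hx with ⟨b, z, w, v2, h⟩ | ⟨m, b, z, w, v2, x1, x2, h, -⟩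
      · exact c.p3a h hn hy hz i1 i2 j1 j2 i3 j3
      · exact c.p3a h hn hy hz i1 i2 j1 j2 i3 j3
    · linarith [c.val3 hn.swap hx hz hy hs hl']
  · exact c.val3 hn hx hy hz hs hl

theorem Ctx.slack_p3 (c : Ctx G S) {u x y z : V} (hu : u ∈ S) (h0 : ∀ t, G.Adj u t → t ∉ S)
    (hn : Nb G u x y z) (hx : Priv G S u x) (hy : Priv G S u y) (hz : Priv G S u z) :
    0 ≤ RD.slack G S u := by
  have hp : RD.pn G S u = 3 := by
    rw [hn.pn]
    simp [hx, hy, hz]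
  have h3 := recv_nonneg (G := G) (S := S) u
  rw [c.slack_zero_eq hu h0 hn, XX, hn.val, hn.give, hp]
  simp only [hx, hy, hz, c.priv_not_live hx, c.priv_not_live hy, c.priv_not_live hz, if_true,
    if_false]
  have h1 := c.val_le x
  have h2 := c.val_le y
  have h4 := c.val_le z
  by_cases sx : ∃ k, Sp G S k x
  · linarith [c.val3' hn hx hy hz sx.choose_spec]
  by_cases sy : ∃ k, Sp G S k y
  · linarith [c.val3' hn.rot hy hz hx sy.choose_spec]
  by_cases sz : ∃ k, Sp G S k z
  · linarith [c.val3' hn.rot.rot hz hx hy sz.choose_spec]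
  linarith [h1.2.1 sx, h2.2.1 sy, h4.2.1 sz]

theorem Ctx.slack_nonneg (c : Ctx G S) {u : V} (hu : u ∈ S) : 0 ≤ RD.slack G S u := by
  by_cases h0 : ∀ t, G.Adj u t → t ∉ S
  · obtain ⟨b, hb⟩ := c.b2 hu h0
    obtain ⟨x, y, hn⟩ := c.nb1 hb.2.2.1.symm
    by_cases hx : Priv G S u x <;> by_cases hy : Priv G S u y
    · exact c.slack_p3 hu h0 hn hb hx hy
    · exact c.slack_p2 hu h0 hn.rot.rot hb hx hy
    · exact c.slack_p2 hu h0 hn.rot hy hb hx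
    · exact c.slack_p1 hu h0 hn hb hx hy
  · push Not at h0
    obtain ⟨m, h1, h2⟩ := h0
    by_cases hc : Cen G S u
    · exact c.slack_cen hc
    · unfold Cen at hc
      push Not at hc
      obtain ⟨x, h3, h4⟩ := hc hu
      exact c.slack_one hu h2 h4 h1 h3

end RD
end PartK

section PartL
open Classical
set_option linter.unusedSectionVars false
namespace RD
variable {V : Type} [Fintype V] {G : SimpleGraph V} {S : Finset V}

/-! ### Bounds around an undominated vertex -/

/-- the effective demand at `b` -/
noncomputable def xx (G : SimpleGraph V) (S : Finset V) (b : V) : ℤ := dd G S b - rr G S b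

theorem Ctx.xx_cases (c : Ctx G S) {k b : V} (hk : Priv G S k b) :
    xx G S b ≤ 0 ∨
    (xx G S b ≤ 2 ∧ Quiet G S b ∧ ∃ v, InU G S v ∧ ¬ NL G S v ∧ G.Adj b v) ∨
    (xx G S b ≤ 2 ∧ dd G S b = 4 ∧ ¬ Quiet G S b ∧ ∃ w, InU G S w ∧ NL G S w ∧ G.Adj b w) ∨
    (xx G S b ≤ 4 ∧ Quiet G S b ∧ ∃ w, InU G S w ∧ NL G S w ∧ G.Adj b w) := by
  have h0 := rr_nonneg (G := G) (S := S) b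
  unfold xx
  by_cases hq : Quiet G S b
  · rcases c.dd_cases b with h | ⟨h, hh⟩ | ⟨h, hh⟩
    · left; linarith
    · right; left; exact ⟨by linarith, hq, hh⟩
    · right; right; right; exact ⟨by linarith, hq, hh⟩
  · have h2 := c.rr2 hk hq
    rcases c.dd_cases b with h | ⟨h, hh⟩ | ⟨h, hh⟩
    · left; linarith
    · left; linarith
    · right; right; left; exact ⟨by linarith, h, hq, hh⟩

/-- slack of a vertex `g` attached to a leaf of an undominated vertex -/
theorem Ctx.slack_g (c : Ctx G S) {v a g g1 g2 : V} (hv : InU G S v) (ha : Leaf G S a v)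
    (hg : g ∈ S) (hn : Nb G g a g1 g2) (h1 : Priv G S g g1) (h2 : Priv G S g g2) :
    8 - (xx G S g1 + xx G S g2) ≤ RD.slack G S g := by
  have hag : G.Adj a g := by grind [Nb]
  have h0 := c.leaf_s0 ha hg hag
  have hna : ¬ Priv G S g a := by
    intro hp
    exact c.priv_not_leaf hp ha
  have e1 : ¬ ∃ k, Sp G S k g1 := c.no_sp h0 hag.symm hna h1
  have e2 : ¬ ∃ k, Sp G S k g2 := c.no_sp h0 hag.symm hna h2
  have hl : ¬ ∃ b, Live G S a b := by
    rintro ⟨b, hb, ⟨k, hk⟩, -⟩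
    have : b = v := ha.2.2.2 b hb.2.2.1 hb.2.1
    subst this
    exact hv.2 k hk.2.2.1 hk.1
  rw [c.slack_zero_eq hg h0 hn]
  unfold XX
  rw [hn.pn, hn.val, hn.give]
  simp only [hna, h1, h2, hl, c.priv_not_live h1, c.priv_not_live h2, if_true, if_false]
  unfold val xx
  rw [spv_zero e1, spv_zero e2]
  linarith [recv_nonneg (G := G) (S := S) g]

theorem Ctx.g_four (c : Ctx G S) {v a g g1 g2 : V} (hv : InU G S v) (ha : Leaf G S a v)
    (hg : g ∈ S) (hn : Nb G g a g1 g2) (h1 : Priv G S g g1) (h2 : Priv G S g g2) :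
    xx G S g1 + xx G S g2 ≤ 4 := by
  rcases c.xx_cases h1 with x | ⟨x, q, w, i1, i2, i3⟩ | ⟨x, d, q, w, i1, i2, i3⟩ | ⟨x, q, w, i1, i2, i3⟩ <;>
  rcases c.xx_cases h2 with x' | ⟨x', q', w', j1, j2, j3⟩ | ⟨x', d', q', w', j1, j2, j3⟩ | ⟨x', q', w', j1, j2, j3⟩ <;>
  first
  | linarith
  | exact (c.p2 hv ha hg hn h1 h2 i1 j1 i3 j3 i2 j2).elim
  | exact (c.gt hn hv ha h1 h2 i1 i2 j1 j2 i3 j3 q q').elim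
  | exact (c.gt hn.swap hv ha h2 h1 j1 j2 i1 i2 j3 i3 q' q).elim

/-- one orientation of the type II bound -/
theorem Ctx.ii_half (c : Ctx G S) {v a v' b3 g h h1 h2 : V} (ht : T2 G S v a v' b3 g h h1 h2) :
    (∃ w, InU G S w ∧ NL G S w ∧ G.Adj h1 w) →
    xx G S h1 + xx G S h2 ≤ 2 ∨ Ex G S v b3 h1 ∨ Ex G S v b3 h2 := by
  rintro ⟨w, w1, w2, w3⟩
  have ht' := ht
  obtain ⟨t1, t2, t3, t4, t5, t6, t7, t8, t9, t10⟩ := ht'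
  have hh : h ∈ S := t8.1
  have n1 : w ≠ v := by rintro rfl; exact w2.not_leaf t4
  have n2 : w ≠ v' := by rintro rfl; exact c.b4 w1 t1 (by grind [Nb]) w2
  by_cases hq1 : Quiet G S h1
  · exact Or.inr (Or.inl (c.t2a ht w1 w3 n1 n2 hq1))
  have hd : dd G S h1 = 4 := by rw [c.dd_eq w1 w3]; simp [dem, w2]
  have x : xx G S h1 ≤ 2 := by
    have := c.rr2 t8 hq1
    unfold xx; linarith
  rcases c.xx_cases t9 with y | ⟨y, q', u, u1, u2, u3⟩ | ⟨y, d', q', u, u1, u2, u3⟩ | ⟨y, q', u, u1, u2, u3⟩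
  · left; linarith
  · by_cases e : u = v
    · subst e
      have : h2 = b3 := by
        have hna := c.priv_not_leaf (v := u) t9
        have hnu : h2 ≠ v' := by rintro rfl; exact t2.2 h t9.2.2.1 hh
        have := u3.symm
        have : h2 ≠ a := by rintro rfl; exact hna t4
        grind [Nb]
      subst this
      exact (c.t2c ht w1 w2 w3).elim
    by_cases e' : u = v'
    · subst e'
      have := c.rr4 t8 hq1 fun y q hy hqS hyq => c.t2e ht w1 w2 w3 u3 q' hy hqS hyq
      left
      unfold xx at *
      linarith
    · exact Or.inr (Or.inr (c.t2a ht.swap u1 u3 e e' q'))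
  · exact (c.p2 t1 t4 hh t7 t8 t9 w1 u1 w3 u3 w2 u2).elim
  · exact (c.p2 t1 t4 hh t7 t8 t9 w1 u1 w3 u3 w2 u2).elim


theorem Ctx.ii (c : Ctx G S) {v a v' b3 g h h1 h2 : V} (ht : T2 G S v a v' b3 g h h1 h2) :
    xx G S h1 + xx G S h2 ≤ 2 ∨ Ex G S v b3 h1 ∨ Ex G S v b3 h2 := by
  by_cases hA : ∃ w, InU G S w ∧ NL G S w ∧ G.Adj h1 w
  · exact c.ii_half ht hA
  by_cases hB : ∃ w, InU G S w ∧ NL G S w ∧ G.Adj h2 w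
  · have := c.ii_half ht.swap hB
    rw [add_comm]; tauto
  have ht' := ht
  obtain ⟨t1, t2, t3, t4, t5, t6, t7, t8, t9, t10⟩ := ht'
  have hh : h ∈ S := t8.1
  have own : ∀ x, Priv G S h x → G.Adj x v → x = b3 := by
    intro x hx hxv
    have hna := c.priv_not_leaf (v := v) hx
    have hnu : x ≠ v' := by rintro rfl; exact t2.2 h hx.2.2.1 hh
    have := hxv.symm
    have : x ≠ a := by rintro rfl; exact hna t4
    grind [Nb]
  rcases c.xx_cases t8 with x | ⟨x, q, w, w1, w2, w3⟩ | ⟨x, d, q, hh⟩ | ⟨x, q, hh⟩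
  · rcases c.xx_cases t9 with y | ⟨y, -⟩ | ⟨y, d', q', hh⟩ | ⟨y, q', hh⟩
    · left; linarith
    · left; linarith
    · exact absurd hh hB
    · exact absurd hh hB
  · rcases c.xx_cases t9 with y | ⟨y, q', u, u1, u2, u3⟩ | ⟨y, d', q', hh⟩ | ⟨y, q', hh⟩
    · left; linarith
    · by_cases e : w = v
      · subst e
        have := own h1 t8 w3
        subst this
        exact (c.t2b ht.swap q').elim
      by_cases e' : u = v
      · subst e'
        have := own h2 t9 u3
        subst this
        exact (c.t2b ht q).elim
      by_cases f : w = v'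
      · by_cases f' : u = v'
        · subst f f'
          exfalso
          obtain ⟨y, hy⟩ := not_NL t2.1 w2
          have p1 := c.priv_not_leaf (v := u) t8
          have p2 := c.priv_not_leaf (v := u) t9
          have p3 : ¬ Leaf G S v u := by
            intro hl
            have := hl.2.2.2 a (by grind [Nb]) t4.1
            have := t3.1
            grind
          have n1 : h1 ≠ v := by rintro rfl; exact t1.2 h t8.2.2.1 hh
          have n2 : h2 ≠ v := by rintro rfl; exact t1.2 h t9.2.2.1 hh
          have := c.nb3 (v := u) (x := v) (y := h1) (z := h2) (by grind [Nb]) w3.symm u3.symm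
            n1.symm n2.symm (by grind [Nb])
          have hya := hy.2.2.1.symm
          have := this.2.2.2.2.2.2.2.2.2 y hya
          grind
        · exact Or.inr (Or.inr (c.t2a ht.swap u1 u3 e' f' q'))
      · exact Or.inr (Or.inl (c.t2a ht w1 w3 e f q))
    · exact absurd hh hB
    · exact absurd hh hB
  · exact absurd hh hA
  · exact absurd hh hA

def GT (G : SimpleGraph V) (S : Finset V) (v g : V) : Prop := g ∈ S ∧ ∃ a, Leaf G S a v ∧ G.Adj a g

/-- number of neighbours which are private -/
noncomputable def tc (G : SimpleGraph V) (S : Finset V) (v : V) : ℤ :=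
  ∑ b, if G.Adj b v ∧ ∃ u, Priv G S u b then 1 else 0

theorem Ctx.is_priv (c : Ctx G S) {v t : V} (hv : InU G S v) (h : G.Adj v t) (h1 : ¬ InU G S t)
    (h2 : ¬ Leaf G S t v) : ∃ u, Priv G S u t := by
  have ht : t ∉ S := hv.2 t h
  have : ∃ u, G.Adj t u ∧ u ∈ S := by
    by_contra hc
    push Not at hc
    exact h1 ⟨ht, hc⟩
  obtain ⟨u, hu, hS⟩ := this
  have : ∃ z, G.Adj t z ∧ z ∉ S ∧ z ≠ v := by
    by_contra hc
    push Not at hc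
    exact h2 ⟨ht, hv.1, h.symm, hc⟩
  obtain ⟨z, z1, z2, z3⟩ := this
  refine ⟨u, hS, ht, hu, fun r r1 r2 => ?_⟩
  have hvS := hv.1
  have n1 : v ≠ u := by rintro rfl; exact hvS hS
  have n2 : u ≠ z := by rintro rfl; exact z2 hS
  have := c.nb3 h.symm hu z1 n1 z3.symm n2
  have := this.2.2.2.2.2.2.2.2.2 r r1
  grind

theorem Ctx.gt_slack_nonneg (c : Ctx G S) (v g : V) :
    0 ≤ if GT G S v g then RD.slack G S g else 0 := by
  split_ifs with h
  · exact c.slack_nonneg h.1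
  · exact le_rfl

theorem Ctx.gt_sum (c : Ctx G S) {v : V} (A : Finset V) (hA : ∀ g ∈ A, GT G S v g) :
    ∑ g ∈ A, RD.slack G S g ≤ ∑ g, if GT G S v g then RD.slack G S g else 0 := by
  calc ∑ g ∈ A, RD.slack G S g = ∑ g ∈ A, if GT G S v g then RD.slack G S g else 0 :=
        Finset.sum_congr rfl fun g hg => (if_pos (hA g hg)).symm
    _ ≤ _ := Finset.sum_le_sum_of_subset_of_nonneg (Finset.subset_univ _)
        fun g _ _ => c.gt_slack_nonneg v g

theorem Ctx.slack4 (c : Ctx G S) {v g : V} (hv : InU G S v) (h : GT G S v g) :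
    4 ≤ RD.slack G S g := by
  obtain ⟨hg, a, ha, hag⟩ := h
  obtain ⟨g1, g2, hn, h1, h2⟩ := c.b7 hv ha hg hag
  have := c.slack_g hv ha hg hn h1 h2
  have := c.g_four hv ha hg hn h1 h2
  linarith

theorem Nb.tc {v x y z : V} (h : Nb G v x y z) : tc G S v =
    (if ∃ u, Priv G S u x then 1 else 0) + (if ∃ u, Priv G S u y then 1 else 0) +
    (if ∃ u, Priv G S u z then 1 else 0) := by
  have := h.sum (fun b => if G.Adj b v ∧ ∃ u, Priv G S u b then (1 : ℤ) else 0) fun t ht =>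
    if_neg fun hh => ht hh.1.symm
  unfold Nb at h
  simpa [RD.tc, h] using this

theorem Ctx.ii_sum (c : Ctx G S) {v a v' b3 g h : V} (hv : InU G S v) (hv' : InU G S v')
    (hn : Nb G v a v' b3) (ha : Leaf G S a v) (hl : ¬ Leaf G S b3 v) (hna : Nb G a v g h)
    (hg : g ∈ S) (hh : h ∈ S) : 10 ≤ RD.slack G S g + RD.slack G S h := by
  obtain ⟨g1, g2, n1, p1, p2⟩ := c.b7 hv ha hg (by grind [Nb])
  obtain ⟨h1, h2, m1, q1, q2⟩ := c.b7 hv ha hh (by grind [Nb])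
  have s1 := c.slack_g hv ha hg n1 p1 p2
  have s2 := c.slack_g hv ha hh m1 q1 q2
  have f1 := c.g_four hv ha hg n1 p1 p2
  have f2 := c.g_four hv ha hh m1 q1 q2
  have key : ∀ x y, Priv G S g x → Priv G S h y → Ex G S v b3 x → Ex G S v b3 y → False := by
    intro x y hx hy ex ey
    rcases ey.2.2 x ex.2.1 hx.2.1 with e | e
    · subst e
      exact hv.2 g hx.2.2.1 hg
    · subst e
      have := hx.2.2.2 h hy.2.2.1 hh
      have : g ≠ h := hna.2.2.1
      grind
  have A := c.ii (v := v) (a := a) (v' := v') (b3 := b3) (g := g) (h := h) (h1 := h1) (h2 := h2)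
    ⟨hv, hv', hn, ha, hna, hg, m1, q1, q2, hl⟩
  have B := c.ii (v := v) (a := a) (v' := v') (b3 := b3) (g := h) (h := g) (h1 := g1) (h2 := g2)
    ⟨hv, hv', hn, ha, hna.swap, hh, n1, p1, p2, hl⟩
  have k1 := key g1 h1 p1 q1
  have k2 := key g1 h2 p1 q2
  have k3 := key g2 h1 p2 q1
  have k4 := key g2 h2 p2 q2
  rcases A with A | A | A
  · linarith
  · rcases B with B | B | B
    · linarith
    · exact (k1 B A).elim
    · exact (k3 B A).elim
  · rcases B with B | B | B
    · linarith
    · exact (k2 B A).elim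
    · exact (k4 B A).elim

/-- the total available around an undominated vertex -/
theorem Ctx.per_v (c : Ctx G S) {v : V} (hv : InU G S v) :
    12 ≤ RD.dem G S v * RD.tc G S v + ∑ g, if GT G S v g then RD.slack G S g else 0 := by
  have h0 : 0 ≤ ∑ g, if GT G S v g then RD.slack G S g else 0 :=
    Finset.sum_nonneg fun g _ => c.gt_slack_nonneg v g
  by_cases hl : NL G S v
  · obtain ⟨x, y, z, h1, h2, h3, h4⟩ := c.cubic v
    have hn : Nb G v x y z := c.nb3 ((h4 x).2 (by simp)) ((h4 y).2 (by simp)) ((h4 z).2 (by simp))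
      h1 h2 h3
    have hp : ∀ t, G.Adj v t → ∃ u, Priv G S u t := fun t ht =>
      c.is_priv hv ht (fun hU => c.b4 hv hU ht hl) (fun hL => hl.not_leaf hL)
    rw [hn.tc]
    simp only [hp x hn.2.2.2.1, hp y hn.2.2.2.2.1, hp z hn.2.2.2.2.2.1, if_true]
    have : RD.dem G S v = 4 := if_pos hl
    rw [this]; linarith
  · obtain ⟨a, ha⟩ := not_NL hv.1 hl
    obtain ⟨g, h, hn, hg, hh⟩ := c.leaf_nb ha
    have Gg : GT G S v g := ⟨hg, a, ha, by grind [Nb]⟩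
    have Gh : GT G S v h := ⟨hh, a, ha, by grind [Nb]⟩
    have hgh : g ≠ h := hn.2.2.1
    have hs2 := c.gt_sum (v := v) {g, h} (by simp [Gg, Gh])
    rw [Finset.sum_pair hgh] at hs2
    have s1 := c.slack4 hv Gg
    have s2 := c.slack4 hv Gh
    by_cases ho : OneLeaf G S v
    · have hd : RD.dem G S v = 2 := by simp [RD.dem, hl, ho]
      obtain ⟨a', ha', hu⟩ := ho
      have hu' : ∀ t, Leaf G S t v → t = a := fun t ht => (hu t ht).trans (hu a ha).symm
      obtain ⟨x, y, hv3⟩ := c.nb1 ha.2.2.1.symm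
      have ax : G.Adj v x := hv3.2.2.2.2.1
      have ay : G.Adj v y := hv3.2.2.2.2.2.1
      have nx : ¬ Leaf G S x v := fun hx => hv3.1 (hu' x hx).symm
      have ny : ¬ Leaf G S y v := fun hx => hv3.2.1 (hu' y hx).symm
      rw [hd, hv3.tc]
      by_cases ux : InU G S x
      · have uy : ¬ InU G S y := fun uy => hv3.2.2.1 (c.b6 hv ux uy ax ay)
        have := c.ii_sum hv ux hv3 ha ny hn hg hh
        simp only [c.is_priv hv ay uy ny, if_true]
        split_ifs <;> linarith
      · by_cases uy : InU G S y
        · have := c.ii_sum hv uy hv3.swap ha nx hn hg hh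
          simp only [c.is_priv hv ax ux nx, if_true]
          split_ifs <;> linarith
        · simp only [c.is_priv hv ay uy ny, c.is_priv hv ax ux nx, if_true]
          split_ifs <;> linarith
    · have hd : RD.dem G S v = 0 := by simp [RD.dem, hl, ho]
      have : ∃ a', Leaf G S a' v ∧ a' ≠ a := by
        by_contra hc
        push Not at hc
        exact ho ⟨a, ha, hc⟩
      obtain ⟨a', ha', hne⟩ := this
      obtain ⟨g', h', hn', hg', hh'⟩ := c.leaf_nb ha'
      have Gg' : GT G S v g' := ⟨hg', a', ha', by grind [Nb]⟩
      have key : g' ≠ g ∧ g' ≠ h := by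
        have : ∀ r, r ∈ S → G.Adj a r → g' ≠ r := by
          rintro r hr har rfl
          obtain ⟨r1, r2, hr3, p1, p2⟩ := c.b7 hv ha hr har
          have e1 := c.priv_not_leaf (v := v) p1
          have e2 := c.priv_not_leaf (v := v) p2
          have := hr3.2.2.2.2.2.2.2.2.2 a' (by grind [Nb])
          grind
        exact ⟨this g hg (by grind [Nb]), this h hh (by grind [Nb])⟩
      have hs3 := c.gt_sum (v := v) {g', g, h} (by simp [Gg, Gh, Gg'])
      rw [Finset.sum_insert (by simp [key]), Finset.sum_pair hgh] at hs3
      have s3 := c.slack4 hv Gg'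
      rw [hd]
      linarith

end RD
end PartL

section PartM
open Classical
set_option linter.unusedSectionVars false
namespace RD
variable {V : Type} [Fintype V] {G : SimpleGraph V} {S : Finset V}

/-! ### Global sums -/

theorem sum_uniq (R : V → Prop) (c : ℤ) (hR : ∀ x y, R x → R y → x = y) :
    (∑ u, if R u then c else 0) = if ∃ u, R u then c else 0 := by
  by_cases h : ∃ u, R u
  · rw [if_pos h]
    obtain ⟨u, hu⟩ := h
    rw [Finset.sum_eq_single u]
    · exact if_pos hu
    · intro w _ hne
      exact if_neg fun hw => hne (hR w u hw hu)
    · simp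
  · rw [if_neg h]
    exact Finset.sum_eq_zero fun u _ => if_neg fun hu => h ⟨u, hu⟩

theorem sum_S (f : V → ℤ) : ∑ u ∈ S, f u = ∑ u, if u ∈ S then f u else 0 := by
  rw [Finset.sum_ite_mem, Finset.univ_inter]

theorem Priv.uniq {u u' b : V} (h : Priv G S u b) (h' : Priv G S u' b) : u = u' :=
  h'.2.2.2 u h.2.2.1 h.1

/-- vertices that are private neighbours -/
def PP (G : SimpleGraph V) (S : Finset V) (b : V) : Prop := ∃ u, Priv G S u b

theorem sum_priv (f : V → ℤ) : ∑ u ∈ S, ∑ b, (if Priv G S u b then f b else 0) =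
    ∑ b, if PP G S b then f b else 0 := by
  rw [Finset.sum_comm]
  refine Finset.sum_congr rfl fun b _ => ?_
  rw [sum_S]
  refine Eq.trans ?_ ((sum_uniq (fun u => Priv G S u b) (f b) fun x y hx hy => hx.uniq hy).trans
    (by unfold PP; congr))
  refine Finset.sum_congr rfl fun u _ => ?_
  by_cases h : Priv G S u b
  · rw [if_pos h, if_pos h.1]
  · rw [if_neg h]; simp

theorem sum_dd : (∑ b, if PP G S b then dd G S b else 0) =
    ∑ v, if InU G S v then dem G S v * tc G S v else 0 := by
  have h1 : ∀ b, (if PP G S b then dd G S b else 0) =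
      ∑ v, if InU G S v ∧ G.Adj b v ∧ PP G S b then dem G S v else 0 := by
    intro b
    by_cases hb : PP G S b
    · simp [hb, dd]
    · simp [hb]
  rw [Finset.sum_congr rfl fun b _ => h1 b, Finset.sum_comm]
  refine Finset.sum_congr rfl fun v _ => ?_
  by_cases hv : InU G S v
  · simp only [hv, true_and, if_true]
    unfold tc
    rw [Finset.mul_sum]
    refine Finset.sum_congr rfl fun b _ => ?_
    unfold PP
    split_ifs <;> simp
  · simp [hv]

theorem Leaf.uniq {y b b' : V} (h : Leaf G S y b) (h' : Leaf G S y b') : b = b' :=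
  h'.2.2.2 b h.2.2.1 h.2.1

theorem sum_rr : (∑ b, if PP G S b then rr G S b else 0) = ∑ u ∈ S, give G S u := by
  have h1 : ∀ b, (if PP G S b then rr G S b else 0) =
      ∑ y, if Live G S y b then rho G S y else 0 := by
    intro b
    by_cases hb : PP G S b
    · simp [hb, rr]
    · rw [if_neg hb]
      exact (Finset.sum_eq_zero fun y _ => if_neg fun h => hb h.2.1).symm
  rw [Finset.sum_congr rfl fun b _ => h1 b, Finset.sum_comm]
  have h2 : ∑ u ∈ S, give G S u =
      ∑ y, ∑ u ∈ S, if G.Adj u y ∧ ∃ b, Live G S y b then pn G S u else 0 := Finset.sum_comm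
  rw [h2]
  refine Finset.sum_congr rfl fun y _ => ?_
  rw [sum_uniq (fun b => Live G S y b) _ fun x z hx hz => hx.1.uniq hz.1, sum_S]
  by_cases h : ∃ b, Live G S y b
  · rw [if_pos h]
    unfold rho
    refine Finset.sum_congr rfl fun q _ => ?_
    rw [G.adj_comm]
    split_ifs <;> simp_all
  · simp [h]

theorem Sp.pp {k x : V} (h : Sp G S k x) : PP G S x := by
  obtain ⟨m, b, z, w, v2, kx, hd⟩ := h
  exact ⟨kx, hd.2.2.2.2.2.2.2.2.2.2.2.1⟩

theorem Ctx.sum_sp (c : Ctx G S) : ∑ u ∈ S, RD.recv G S u ≤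
    ∑ b, if PP G S b then RD.spv G S b else 0 := by
  have h0 : ∑ u ∈ S, RD.recv G S u ≤ ∑ u, RD.recv G S u :=
    Finset.sum_le_sum_of_subset_of_nonneg (Finset.subset_univ _) fun u _ _ => recv_nonneg u
  refine h0.trans ?_
  unfold recv
  rw [Finset.sum_comm]
  refine Finset.sum_le_sum fun x _ => ?_
  rw [sum_uniq (fun k => Sp G S k x) _ fun k k' h h' => c.sp_uniq h h']
  unfold spv
  by_cases h : ∃ k, Sp G S k x
  · obtain ⟨k, hk⟩ := h
    rw [if_pos ⟨k, hk⟩, if_pos hk.pp]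
  · simp [h]

theorem Ctx.sum_XX (c : Ctx G S) :
    (∑ v, if InU G S v then RD.dem G S v * RD.tc G S v else 0) ≤ ∑ u ∈ S, XX G S u := by
  have : ∑ u ∈ S, XX G S u = (∑ u ∈ S, ∑ b, if Priv G S u b then RD.val G S b else 0) +
      ∑ u ∈ S, RD.give G S u - ∑ u ∈ S, RD.recv G S u := by
    unfold XX
    rw [Finset.sum_sub_distrib, Finset.sum_add_distrib]
  have h2 : (∑ b, if PP G S b then RD.val G S b else 0) = (∑ b, if PP G S b then dd G S b else 0) -
      (∑ b, if PP G S b then rr G S b else 0) + ∑ b, if PP G S b then spv G S b else 0 := by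
    rw [← Finset.sum_sub_distrib, ← Finset.sum_add_distrib]
    refine Finset.sum_congr rfl fun b _ => ?_
    unfold val
    split_ifs <;> simp
  rw [this, sum_priv, h2, sum_dd, sum_rr]
  linarith [c.sum_sp]

theorem Ctx.nb0 (c : Ctx G S) (u : V) : ∃ x y z, Nb G u x y z := by
  obtain ⟨x, y, z, h1, h2, h3, h4⟩ := c.cubic u
  exact ⟨x, y, z, c.nb3 ((h4 x).2 (by simp)) ((h4 y).2 (by simp)) ((h4 z).2 (by simp))
    h1 h2 h3⟩

theorem Ctx.sum_deg (c : Ctx G S) (u : V) (k : ℤ) : (∑ t, if G.Adj u t then k else 0) = 3 * k := by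
  obtain ⟨x, y, z, h⟩ := c.nb0 u
  rw [h.sum (fun t => if G.Adj u t then k else 0) fun t ht => if_neg ht]
  unfold Nb at h
  simp only [h, if_true]
  ring

theorem Ctx.sum_flow (c : Ctx G S) : ∑ u ∈ S, flow G S u = 0 := by
  unfold flow
  rw [Finset.sum_sub_distrib, Finset.sum_comm, sum_S (fun u => if Cen G S u then (12 : ℤ) else 0),
    ← Finset.sum_sub_distrib]
  refine Finset.sum_eq_zero fun t _ => ?_
  rw [sum_S]
  by_cases h : Cen G S t
  · simp only [h, h.1, if_true, and_true]
    have := c.sum_deg t 4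
    rw [show (12 : ℤ) = 3 * 4 by norm_num, ← this, sub_eq_zero]
    refine Finset.sum_congr rfl fun u _ => ?_
    rw [G.adj_comm]
    by_cases hu : G.Adj t u
    · simp [hu, h.2 u hu]
    · simp [hu]
  · simp [h]

theorem Ctx.gt_uniq (c : Ctx G S) {v v' g : V} (hv : InU G S v) (h : GT G S v g)
    (h' : GT G S v' g) : v = v' := by
  obtain ⟨hg, a, ha, hag⟩ := h
  obtain ⟨-, a', ha', hag'⟩ := h'
  obtain ⟨r1, r2, hr3, p1, p2⟩ := c.b7 hv ha hg hag
  have e1 := c.priv_not_leaf (v := v') p1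
  have e2 := c.priv_not_leaf (v := v') p2
  have := hr3.2.2.2.2.2.2.2.2.2 a' hag'.symm
  have : a' = a := by grind
  subst this
  exact ha.uniq ha'

theorem Ctx.sum_slack (c : Ctx G S) :
    (∑ v, if InU G S v then ∑ g, (if GT G S v g then RD.slack G S g else 0) else 0) ≤
    ∑ u ∈ S, RD.slack G S u := by
  have h1 : ∀ v, (if InU G S v then ∑ g, (if GT G S v g then RD.slack G S g else 0) else 0) =
      ∑ g, if InU G S v ∧ GT G S v g then RD.slack G S g else 0 := by
    intro v
    by_cases hv : InU G S v <;> simp [hv]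
  rw [Finset.sum_congr rfl fun b _ => h1 b, Finset.sum_comm, sum_S (S := S)]
  refine Finset.sum_le_sum fun g _ => ?_
  have e := sum_uniq (fun v => InU G S v ∧ GT G S v g) (RD.slack G S g)
    fun x y hx hy => c.gt_uniq hx.1 hx.2 hy.2
  refine le_trans (le_of_eq (Eq.trans (Finset.sum_congr rfl fun x _ => by congr) e)) ?_
  by_cases h : ∃ v, InU G S v ∧ GT G S v g
  · rw [if_pos h]
    obtain ⟨v, h1, h2⟩ := h
    rw [if_pos h2.1]
  · rw [if_neg h]
    split_ifs with hg
    · exact c.slack_nonneg hg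
    · exact le_rfl

theorem card_U : ((USet G S).card : ℤ) = ∑ v, if InU G S v then 1 else 0 := by
  unfold USet
  rw [Finset.card_filter]
  push_cast
  rfl

theorem Ctx.main_ineq (c : Ctx G S) :
    3 * ((USet G S).card : ℤ) ≤ ∑ u ∈ S, (RD.pn G S u - RD.ds G S u) := by
  have h1 : 4 * ∑ u ∈ S, (RD.pn G S u - RD.ds G S u) =
      ∑ u ∈ S, RD.slack G S u + ∑ u ∈ S, XX G S u + ∑ u ∈ S, flow G S u := by
    rw [Finset.mul_sum, ← Finset.sum_add_distrib, ← Finset.sum_add_distrib]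
    refine Finset.sum_congr rfl fun u _ => ?_
    unfold slack; ring
  have h2 : 12 * ((USet G S).card : ℤ) ≤
      (∑ v, if InU G S v then RD.dem G S v * RD.tc G S v else 0) +
      ∑ v, if InU G S v then ∑ g, (if GT G S v g then RD.slack G S g else 0) else 0 := by
    rw [card_U, Finset.mul_sum, ← Finset.sum_add_distrib]
    refine Finset.sum_le_sum fun v _ => ?_
    by_cases hv : InU G S v
    · simp only [hv, if_true]
      have := c.per_v hv
      linarith
    · simp [hv]
  have h3 := c.sum_XX
  have h4 := c.sum_flow
  have h5 := c.sum_slack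
  linarith

theorem Ctx.ds_out (c : Ctx G S) {t : V} (ht : t ∉ S) : RD.ds G S t =
    2 - (if PP G S t then 1 else 0) - 2 * (if InU G S t then 1 else 0) := by
  obtain ⟨x, hx, hxt⟩ := c.feas t ht
  obtain ⟨y, z, hn⟩ := c.nb1 hxt
  rw [hn.ds]
  have hU : InU G S t ↔ y ∉ S ∧ z ∉ S := by
    unfold InU Nb at *
    grind
  have hP : PP G S t ↔ (y ∈ S ∧ z ∉ S) ∨ (y ∉ S ∧ z ∈ S) := by
    unfold PP Priv
    constructor
    · rintro ⟨u, h1, h2, h3, h4⟩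
      unfold Nb at hn
      grind
    · rintro (⟨h1, h2⟩ | ⟨h1, h2⟩)
      · refine ⟨y, h1, ht, by grind [Nb], fun u hu => ?_⟩
        unfold Nb at hn; grind
      · refine ⟨z, h2, ht, by grind [Nb], fun u hu => ?_⟩
        unfold Nb at hn; grind
  by_cases hy : y ∈ S <;> by_cases hz : z ∈ S <;> simp [hU, hP, hy, hz, hx]

theorem Ctx.sum_ds (c : Ctx G S) : ∑ t, RD.ds G S t = 3 * (S.card : ℤ) := by
  unfold ds
  rw [Finset.sum_comm]
  have h1 : ∀ u, (∑ t, if G.Adj t u ∧ u ∈ S then (1 : ℤ) else 0) = if u ∈ S then 3 else 0 := by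
    intro u
    by_cases hu : u ∈ S
    · simp only [hu, and_true, if_true]
      rw [← show (3 : ℤ) * 1 = 3 by norm_num, ← c.sum_deg u 1]
      exact Finset.sum_congr rfl fun t _ => by rw [G.adj_comm]
    · simp [hu]
  rw [Finset.sum_congr rfl fun u _ => h1 u, ← sum_S]
  simp [mul_comm]

theorem Ctx.five (c : Ctx G S) : 5 * (S.card + (USet G S).card) ≤ 2 * Fintype.card V := by
  have h1 := c.main_ineq
  rw [Finset.sum_sub_distrib] at h1
  have h2 : ∑ u ∈ S, RD.pn G S u = ∑ b, if PP G S b then 1 else 0 := sum_priv fun _ => 1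
  have h3 : ∑ t, RD.ds G S t = ∑ u ∈ S, RD.ds G S u + (2 * ((Fintype.card V : ℤ) - S.card) -
      (∑ b, if PP G S b then 1 else 0) - 2 * (USet G S).card) := by
    have e1 : (Fintype.card V : ℤ) = ∑ v : V, 1 := by simp
    have e2 : (S.card : ℤ) = ∑ v : V, if v ∈ S then 1 else 0 := by rw [← sum_S]; simp
    rw [card_U, sum_S (S := S), e1, e2, ← Finset.sum_sub_distrib, Finset.mul_sum, Finset.mul_sum,
      ← Finset.sum_sub_distrib, ← Finset.sum_sub_distrib, ← Finset.sum_add_distrib]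
    refine Finset.sum_congr rfl fun t _ => ?_
    by_cases ht : t ∈ S
    · have n1 : ¬ PP G S t := fun ⟨u, hu⟩ => hu.2.1 ht
      have n2 : ¬ InU G S t := fun hu => hu.1 ht
      simp [ht, n1, n2]
    · rw [c.ds_out ht]
      simp [ht]
  have h4 := c.sum_ds
  have : 5 * ((S.card : ℤ) + (USet G S).card) ≤ 2 * Fintype.card V := by linarith
  exact_mod_cast this

end RD
end PartM

section Final
set_option linter.unusedSectionVars false
namespace RD

/-! ### Completing a feasible set -/

section
open Classical
variable {V : Type} [Fintype V] {G : SimpleGraph V}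

theorem USet_insert_lt {S : Finset V} {v a : V} (hv : InU G S v) (ha : a = v ∨ G.Adj v a) :
    (USet G (insert a S)).card < (USet G S).card := by
  apply Finset.card_lt_card
  rw [Finset.ssubset_iff_of_subset]
  · refine ⟨v, by simp [USet, hv], ?_⟩
    intro h
    simp only [USet, Finset.mem_filter, Finset.mem_univ, true_and] at h
    rcases ha with rfl | ha
    · exact h.1 (Finset.mem_insert_self _ _)
    · exact h.2 a ha (Finset.mem_insert_self _ _)
  · intro t ht
    obtain ⟨h1, h2⟩ := (Finset.mem_filter.1 ht).2
    refine Finset.mem_filter.2 ⟨Finset.mem_univ _, fun h => h1 (Finset.mem_insert_of_mem h),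
      fun u hu h => h2 u hu (Finset.mem_insert_of_mem h)⟩

theorem complete (hd : ∀ v a : V, ∃ u, G.Adj v u ∧ u ≠ a) (n : ℕ) :
    ∀ S : Finset V, Feas G S → (USet G S).card ≤ n →
      ∃ T : Finset V, Feas G T ∧ (∀ v, ¬ InU G T v) ∧ T.card ≤ S.card + (USet G S).card := by
  induction n with
  | zero =>
    intro S hF hn
    refine ⟨S, hF, fun v hv => ?_, by omega⟩
    have : v ∈ USet G S := by simp [USet, hv]
    have := Finset.card_pos.2 ⟨v, this⟩
    omega
  | succ n ih =>
    intro S hF hn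
    by_cases hU : ∃ v, InU G S v
    · obtain ⟨v, hv⟩ := hU
      have step : ∀ a, a ∉ S → (a = v ∨ G.Adj v a) → Feas G (insert a S) →
          ∃ T : Finset V, Feas G T ∧ (∀ v, ¬ InU G T v) ∧ T.card ≤ S.card + (USet G S).card := by
        intro a haS ha hFa
        have h1 := USet_insert_lt hv ha
        obtain ⟨T, h2, h3, h4⟩ := ih (insert a S) hFa (by omega)
        rw [Finset.card_insert_of_notMem haS] at h4
        exact ⟨T, h2, h3, by omega⟩
      by_cases hl : NL G S v
      · refine step v hv.1 (Or.inl rfl) fun t ht => ?_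
        simp only [Finset.mem_insert, not_or] at ht
        obtain ⟨u, hu, htu⟩ := hF t ht.2
        by_cases e : u = v
        · subst e
          obtain ⟨z, z1, z2, z3⟩ := hl t htu.symm ht.2
          exact ⟨z, by simp [z2, z3], z1⟩
        · exact ⟨u, by simp [hu, e], htu⟩
      · obtain ⟨a, ha⟩ := not_NL hv.1 hl
        refine step a ha.1 (Or.inr ha.2.2.1.symm) fun t ht => ?_
        simp only [Finset.mem_insert, not_or] at ht
        obtain ⟨u, hu, htu⟩ := hF t ht.2
        by_cases e : u = a
        · subst e
          have : t = v := ha.2.2.2 t htu.symm ht.2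
          subst this
          obtain ⟨z, z1, z2⟩ := hd t u
          exact ⟨z, by simp [hv.2 z z1, z2], z1⟩
        · exact ⟨u, by simp [hu, e], htu⟩
    · push Not at hU
      exact ⟨S, hF, hU, by omega⟩

theorem upper (G : SimpleGraph V) (h3 : ∀ v : V, (G.neighborSet v).ncard = 3) :
    5 * restrainedDominationNumber G ≤ 2 * Fintype.card V := by
  have cubic : ∀ v, ∃ x y z, x ≠ y ∧ x ≠ z ∧ y ≠ z ∧ ∀ t, G.Adj v t ↔ t = x ∨ t = y ∨ t = z := by
    intro v
    obtain ⟨x, y, z, h1, h2, h3, h4⟩ := Set.ncard_eq_three.1 (h3 v)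
    refine ⟨x, y, z, h1, h2, h3, fun t => ?_⟩
    rw [← SimpleGraph.mem_neighborSet, h4]
    simp
  obtain ⟨S, c⟩ := exists_ctx G cubic
  have hd : ∀ v a : V, ∃ u, G.Adj v u ∧ u ≠ a := by
    intro v a
    obtain ⟨x, y, z, h1, h2, h3, h4⟩ := cubic v
    by_cases e : x = a
    · exact ⟨y, (h4 y).2 (by simp), fun h => h1 (e.trans h.symm)⟩
    · exact ⟨x, (h4 x).2 (by simp), e⟩
  obtain ⟨T, hF, hU, hT⟩ := complete hd _ S c.feas le_rfl
  have h5 := c.five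
  have : restrainedDominationNumber G ≤ T.card := by
    apply Nat.sInf_le
    refine ⟨(T : Set V), ⟨fun v hv => ?_, fun v hv => ?_⟩, Set.ncard_coe_finset T⟩
    · by_contra hc
      push Not at hc
      exact hU v ⟨by simpa using hv, fun u hu huT => hc u (by simpa using huT) hu⟩
    · obtain ⟨u, h1, h2⟩ := hF v (by simpa using hv)
      exact ⟨u, by simpa using h1, h2⟩
  omega

end

/-! ### The Petersen graph -/

def padj (a b : Fin 10) : Bool := Nat.testBit 257617904308990774908043727922 (10 * a.val + b.val)

def petersen : SimpleGraph (Fin 10) where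
  Adj a b := padj a b = true
  symm := ⟨by decide +kernel⟩
  loopless := ⟨by decide +kernel⟩

theorem padj_cubic : ∀ v : Fin 10, (Finset.univ.filter fun u => padj v u = true).card = 3 := by
  decide +kernel

theorem petersen_cubic (v : Fin 10) : (petersen.neighborSet v).ncard = 3 := by
  rw [← padj_cubic v, ← Set.ncard_coe_finset]
  congr 1
  ext u
  simp [petersen]

theorem padj_small : ∀ a b c : Fin 10, ∃ v : Fin 10, v ≠ a ∧ v ≠ b ∧ v ≠ c ∧
    ((padj v a = false ∧ padj v b = false ∧ padj v c = false) ∨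
      ∀ u, padj v u = true → u = a ∨ u = b ∨ u = c) := by
  decide +kernel

theorem petersen_lower : 4 ≤ restrainedDominationNumber petersen := by
  have hne : {n : ℕ | ∃ S : Set (Fin 10), IsRestrainedDomSet petersen S ∧ S.ncard = n}.Nonempty :=
    ⟨_, Set.univ, ⟨fun v hv => absurd (Set.mem_univ v) hv, fun v hv => absurd (Set.mem_univ v) hv⟩,
      rfl⟩
  obtain ⟨S, hS, hc⟩ := Nat.sInf_mem hne
  change S.ncard = restrainedDominationNumber petersen at hc
  rw [← hc]
  by_contra hlt
  have key : ∃ a b c : Fin 10, S = {a, b, c} := by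
    have : S.ncard = 0 ∨ S.ncard = 1 ∨ S.ncard = 2 ∨ S.ncard = 3 := by omega
    rcases this with h | h | h | h
    · rw [Set.ncard_eq_zero] at h
      subst h
      obtain ⟨u, hu, -⟩ := hS.1 0 (by simp)
      exact absurd hu (by simp)
    · obtain ⟨a, rfl⟩ := Set.ncard_eq_one.1 h
      exact ⟨a, a, a, by simp⟩
    · obtain ⟨a, b, -, rfl⟩ := Set.ncard_eq_two.1 h
      exact ⟨a, b, b, by simp⟩
    · obtain ⟨a, b, c, -, -, -, rfl⟩ := Set.ncard_eq_three.1 h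
      exact ⟨a, b, c, rfl⟩
  obtain ⟨a, b, c, rfl⟩ := key
  obtain ⟨v, h1, h2, h3, h4⟩ := padj_small a b c
  have hv : v ∉ ({a, b, c} : Set (Fin 10)) := by simp [h1, h2, h3]
  rcases h4 with ⟨e1, e2, e3⟩ | h4
  · obtain ⟨u, hu, hvu⟩ := hS.1 v hv
    change padj v u = true at hvu
    rcases hu with rfl | rfl | rfl <;> simp_all
  · obtain ⟨u, hu, hvu⟩ := hS.2 v hv
    exact hu (h4 u hvu)

end RD
end Final

/-- `2/5` is the least real constant `c` such that every finite cubic simple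
graph `G` satisfies `γ_r(G) ≤ c · |V(G)|`. -/
theorem isLeast_restrainedDomination_cubic_constant :
    IsLeast {c : ℝ | ∀ (V : Type) [Fintype V] (G : SimpleGraph V),
      (∀ v : V, (G.neighborSet v).ncard = 3) →
        (restrainedDominationNumber G : ℝ) ≤ c * Fintype.card V} (2 / 5) := by
  constructor
  · intro V _ G h3
    have h : ((5 * restrainedDominationNumber G : ℕ) : ℝ) ≤ ((2 * Fintype.card V : ℕ) : ℝ) :=
      Nat.cast_le.2 (RD.upper G h3)
    push_cast at h
    linarith
  · intro c hc
    have h := hc (Fin 10) RD.petersen RD.petersen_cubic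
    have h4 : (4 : ℝ) ≤ (restrainedDominationNumber RD.petersen : ℝ) := by
      exact_mod_cast RD.petersen_lower
    simp only [Fintype.card_fin] at h
    push_cast at h
    linarith
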